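/- Let l ≥ 3 be an integer. (i) For n ≥ k and 1 ≤ r ≤ d_{n+1}, consider words w of length r·|s_n| such that w^l is a factor of 𝐬: if l·r < d_{n+1} + 2, the set of such words is exactly { C_j(s_n^r) : 0 ≤ j ≤ |s_n| - 1 } (of cardinality |s_n|); if l·r = d_{n+1} + 2, it is exactly { C_j(s_n^r) : 0 ≤ j ≤ |D_{n-k}| } (of cardinality |D_{n-k}| + 1); if l·r > d_{n+1} + 2, there is no such word. (ii) For 2 ≤ i ≤ k, n ≥ i - 1, and 1 ≤ r ≤ d_{n+1} (with r ≤ d_{n+1} - 1 when i = k), there is no word w of length |s_n^r s_{n-1}^{d_n} s_{n-2}^{d_{n-1}} ⋯ s_{n+2-i}^{d_{n+3-i}} s_{n+1-i}| such that w^l is a factor of 𝐬. -/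

import Mathlib

/-!
The word `𝐬` is the standard episturmian word directed by
`a_1^{d_1} a_2^{d_2} ⋯ a_k^{d_k} a_1^{d_{k+1}} ⋯`, that is, it is obtained by composing the morphisms
`ψ_c` (with `ψ_c(c) = c` and `ψ_c(b) = cb` for `b ≠ c`) along this sequence. The word `s_m` is the
image of the letter of block `m` under the morphisms of all earlier blocks (`s_eq_sg`).

*Upper bound.* Let `z₀` be a factor with a period `p₀`, where `|z₀| ≥ 2 p₀`. A periodic factor of
`ψ_c(u) c` extends, keeping its period, to a word that starts and ends with `c` (`psi_extend`); such a
word is `ψ_c(z') c` for a factor `z'` of `u`, and the period is the length of the image of a period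
prefix of `z'` (`psi_factor`, `psi_per`). Hence periods can be pulled back one morphism at a time. The
letters `c` added on the way make up the palindromic prefixes `Pal`, which are shorter than the images
of any two distinct letters together (`Pal_length_le`). Therefore the pulled-back word remains longer
than its period, and the process (`descent`) can end only with a power `b ^ e` of a single letter. If
`z₀ = w ^ l` with `l ≥ 3`, comparison of lengths gives `e ≥ 2`. So `b` is the leading letter of the
shifted directive sequence, and the shift is the start of a block `m`. There `b` has exponent
at most `d_{m+1} + 1` (`Lang_replicate_bound`), so that `w ^ l` lies in the run
`s_m ^ (d_{m+1} + 1) Pal` of period `|s_m|`. This is `cube_structure`: `w` is a conjugate of some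
`s_m ^ q` with `l q ≤ d_{m+1} + 2`.

*Realization and counting.* That run is indeed a factor (`run_factor`), and for `m ≥ k` its length is
`(d_{m+1} + 2) |s_m| + |D_{m-k}|` (`Pal_T_length`), which tells exactly which conjugates occur. They
are distinct because `s_m` is primitive, as the image of a letter (`Phi_prim`).

*The two kinds of lengths.* Since `q ≤ d_{m+1}` and `d_{m+1} |s_m| < |s_{m+1}|`, the length of `w`
determines `m` and `q` (`index_unique`). The lengths in the second claim lie strictly between two
consecutive multiples of `|s_n|` and below `|s_{n+1}|` (`part_two_length`), so no power has such a root.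
-/

namespace Epi

variable {α : Type*}

/-- `pw w p` is the `p`-fold concatenation `w^p`. -/
def pw (w : List α) : ℕ → List α
  | 0 => []
  | p + 1 => w ++ pw w p

/-- `S k a d m` is the word `s_{m-(k-1)}` of the paper (shifted indexing: `m : ℕ`
ranges over the indices `n ≥ 1-k`). -/
def S (k : ℕ) (a : ℕ → α) (d : ℕ → ℕ) : ℕ → List α
  | m =>
    if h : m < max k 1 then [a ((m + 1) % k + 1)]
    else
      ((List.range (k - 1)).map
          (fun j => pw (S k a d (m - 1 - j)) (d (m + 1 - k - j)))).flatten ++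
        S k a d (m - max k 1)
  termination_by m => m
  decreasing_by all_goals omega

/-- `s k a d n` is the word `s_n`, for `n ≥ 0`. -/
def s (k : ℕ) (a : ℕ → α) (d : ℕ → ℕ) (n : ℕ) : List α :=
  S k a d (n + (k - 1))

/-- `D k a d n` is the word `D_n = s_n^{d_{n+1}-1} s_{n-1}^{d_n} ⋯ s_1^{d_2} s_0^{d_1}`. -/
def D (k : ℕ) (a : ℕ → α) (d : ℕ → ℕ) (n : ℕ) : List α :=
  pw (s k a d n) (d (n + 1) - 1) ++
    ((List.range n).map (fun j => pw (s k a d (n - 1 - j)) (d (n - j)))).flatten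

/-- `G k a d n r` is the word `G_{n,r}`: `s_n` with its prefix of length `|D_{n-r}|` removed. -/
def G (k : ℕ) (a : ℕ → α) (d : ℕ → ℕ) (n r : ℕ) : List α :=
  (s k a d n).drop (D k a d (n - r)).length

/-- `Om k a d n r` is the set `Ω_n^r` of singular `n`-words of the `r`-th kind. -/
def Om (k : ℕ) (a : ℕ → α) (d : ℕ → ℕ) (n r : ℕ) : Set (List α) :=
  { w | w.length = (s k a d n).length ∧
      w <:+:
        ((((G k a d n r).reverse ++ D k a d (n - r) ++ G k a d n r).drop 1).dropLast) }

/-- `w` is a factor of the infinite word `𝐬`. -/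
def FactorS (k : ℕ) (a : ℕ → α) (d : ℕ → ℕ) (w : List α) : Prop :=
  ∃ N, w <:+: s k a d N

/-! ### The episturmian morphisms -/

/-- The episturmian morphism `ψ_c`, fixing `c` and sending every other letter `b` to `c b`. -/
noncomputable def psi (c : α) (w : List α) : List α :=
  open Classical in w.flatMap (fun b => if b = c then [c] else [c, b])

@[simp] lemma psi_nil (c : α) : psi c [] = [] := rfl

lemma psi_append (c : α) (u v : List α) : psi c (u ++ v) = psi c u ++ psi c v := by
  simp [psi]

lemma psi_cons_self (c : α) (u : List α) : psi c (c :: u) = c :: psi c u := by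
  simp [psi]

lemma psi_cons_ne {b c : α} (h : b ≠ c) (u : List α) : psi c (b :: u) = c :: b :: psi c u := by
  simp [psi, h]

lemma psi_cons_exists (b c : α) (u : List α) : ∃ v, psi c (b :: u) = c :: v := by
  by_cases h : b = c
  · subst h; exact ⟨_, psi_cons_self _ _⟩
  · exact ⟨_, psi_cons_ne h _⟩

lemma mem_of_mem_psi {b c : α} (h : b ≠ c) {u : List α} (hb : b ∈ psi c u) : b ∈ u := by
  induction u with
  | nil => simp at hb
  | cons e u ih =>
    by_cases he : e = c
    · subst he
      rw [psi_cons_self] at hb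
      grind
    · rw [psi_cons_ne he] at hb
      grind

/-- A cut of `ψ_c(u)` just before an occurrence of `c` (or at the end) is a cut between images
of letters. -/
lemma psi_decode {c : α} {u X Y : List α} (h : psi c u = X ++ Y)
    (hY : ∀ b Y', Y = b :: Y' → b = c) :
    ∃ X' Y', u = X' ++ Y' ∧ X = psi c X' ∧ Y = psi c Y' := by
  induction u generalizing X with
  | nil =>
    simp at h
    exact ⟨[], [], by simp [h]⟩
  | cons e u ih =>
    by_cases hX : X = []
    · exact ⟨[], e :: u, by simp, by simp [hX], by simp [h, hX]⟩
    obtain ⟨f, X1, rfl⟩ := List.exists_cons_of_ne_nil hX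
    by_cases he : e = c
    · subst he
      rw [psi_cons_self] at h
      simp only [List.cons_append, List.cons.injEq] at h
      obtain ⟨X', Y', rfl, rfl, rfl⟩ := ih h.2
      exact ⟨e :: X', Y', by simp, by rw [psi_cons_self, h.1], rfl⟩
    · rw [psi_cons_ne he] at h
      simp only [List.cons_append, List.cons.injEq] at h
      obtain ⟨h1, h2⟩ := h
      cases X1 with
      | nil => exact absurd (hY _ _ h2.symm) he
      | cons g X2 =>
        simp only [List.cons_append, List.cons.injEq] at h2
        obtain ⟨X', Y', rfl, rfl, rfl⟩ := ih h2.2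
        exact ⟨e :: X', Y', by simp, by rw [psi_cons_ne he, h1, h2.1], rfl⟩

lemma psi_injective (c : α) : Function.Injective (psi c) := by
  intro u
  induction u with
  | nil =>
    intro v h
    cases v with
    | nil => rfl
    | cons e v => obtain ⟨r, hr⟩ := psi_cons_exists e c v; simp [hr] at h
  | cons e u ih =>
    intro v h
    cases v with
    | nil => obtain ⟨r, hr⟩ := psi_cons_exists e c u; simp [hr] at h
    | cons f v =>
      by_cases he : e = c <;> by_cases hf : f = c
      · subst he; subst hf
        simp only [psi_cons_self, List.cons.injEq, true_and] at h
        rw [ih h]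
      · subst he
        rw [psi_cons_self, psi_cons_ne hf] at h
        simp only [List.cons.injEq, true_and] at h
        cases u with
        | nil => simp at h
        | cons g u =>
          obtain ⟨r, hr⟩ := psi_cons_exists g e u
          rw [hr] at h
          simp only [List.cons.injEq] at h
          exact absurd h.1.symm hf
      · subst hf
        rw [psi_cons_self, psi_cons_ne he] at h
        simp only [List.cons.injEq, true_and] at h
        cases v with
        | nil => simp at h
        | cons g v =>
          obtain ⟨r, hr⟩ := psi_cons_exists g f v
          rw [hr] at h
          simp only [List.cons.injEq] at h
          exact absurd h.1 he
      · rw [psi_cons_ne he, psi_cons_ne hf] at h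
        simp only [List.cons.injEq, true_and] at h
        rw [h.1, ih h.2]

lemma psi_isPrefix {c : α} {u v : List α} (h : u <+: v) : psi c u <+: psi c v := by
  obtain ⟨r, rfl⟩ := h
  exact ⟨psi c r, (psi_append _ _ _).symm⟩

/-- Removing the final `c` from `ψ_c(u) c = X c R` leaves a remainder that is empty or starts
with `c`. -/
lemma psi_strip {c : α} {u X R : List α} (h : psi c u ++ [c] = X ++ c :: R) :
    ∃ R', psi c u = X ++ R' ∧ ∀ b Y', R' = b :: Y' → b = c := by
  rcases List.eq_nil_or_concat R with rfl | ⟨R1, f, rfl⟩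
  · refine ⟨[], ?_, by simp⟩
    simpa using List.append_inj_left' h rfl
  · refine ⟨c :: R1, ?_, by simp +contextual⟩
    have h' : psi c u ++ [c] = (X ++ c :: R1) ++ [f] := by simpa using h
    exact List.append_inj_left' h' rfl

lemma psi_pred {c b : α} (hb : b ≠ c) {u P R : List α} (h : psi c u ++ [c] = P ++ b :: R) :
    ∃ P', P = P' ++ [c] := by
  induction u generalizing P with
  | nil =>
    cases P with
    | nil => simp at h; exact absurd h.1.symm hb
    | cons f P => simp at h
  | cons e u ih =>
    by_cases he : e = c
    · subst he
      rw [psi_cons_self] at h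
      cases P with
      | nil => simp at h; exact absurd h.1.symm hb
      | cons f P =>
        simp only [List.cons_append, List.cons.injEq] at h
        obtain ⟨P', rfl⟩ := ih h.2
        exact ⟨f :: P', rfl⟩
    · rw [psi_cons_ne he] at h
      cases P with
      | nil => simp at h; exact absurd h.1.symm hb
      | cons f P =>
        simp only [List.cons_append, List.cons.injEq] at h
        obtain ⟨rfl, h⟩ := h
        cases P with
        | nil => exact ⟨[], rfl⟩
        | cons g P =>
          simp only [List.cons_append, List.cons.injEq] at h
          obtain ⟨P', rfl⟩ := ih h.2
          exact ⟨c :: g :: P', rfl⟩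

lemma psi_succ {c b : α} (hb : b ≠ c) {u P R : List α} (h : psi c u ++ [c] = P ++ b :: R) :
    ∃ R', R = c :: R' := by
  induction u generalizing P with
  | nil =>
    cases P with
    | nil => simp at h; exact absurd h.1.symm hb
    | cons f P => simp at h
  | cons e u ih =>
    by_cases he : e = c
    · subst he
      rw [psi_cons_self] at h
      cases P with
      | nil => simp at h; exact absurd h.1.symm hb
      | cons f P =>
        simp only [List.cons_append, List.cons.injEq] at h
        exact ih h.2
    · rw [psi_cons_ne he] at h
      cases P with
      | nil => simp at h; exact absurd h.1.symm hb
      | cons f P =>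
        simp only [List.cons_append, List.cons.injEq] at h
        obtain ⟨rfl, h⟩ := h
        cases P with
        | nil =>
          simp only [List.nil_append, List.cons.injEq] at h
          rw [← h.2]
          cases u with
          | nil => exact ⟨[], rfl⟩
          | cons g u =>
            obtain ⟨v, hv⟩ := psi_cons_exists g c u
            exact ⟨v ++ [c], by rw [hv]; rfl⟩
        | cons g P =>
          simp only [List.cons_append, List.cons.injEq] at h
          exact ih h.2

/-! ### Periods and desubstitution -/

/-- `p` is a period of `z`: deleting the first `p` letters gives a prefix of `z`. -/
def Per (p : ℕ) (z : List α) : Prop := z.drop p <+: z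

/-- A word of `ψ_c(u) c` beginning and ending with `c` is `ψ_c(z') c` for a factor `z'` of `u`. -/
lemma psi_factor {c : α} {u z : List α} (h : z <:+: psi c u ++ [c])
    (h1 : ∃ z1, z = c :: z1) (h2 : ∃ z2, z = z2 ++ [c]) :
    ∃ z', z' <:+: u ∧ z = psi c z' ++ [c] := by
  obtain ⟨P, Q, h⟩ := h
  obtain ⟨z1, hz1⟩ := h1
  obtain ⟨z2, rfl⟩ := h2
  obtain ⟨R', hR, hR'⟩ := psi_strip (c := c) (u := u) (X := P ++ z2) (R := Q) (by
    rw [← h]; simp)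
  rw [List.append_assoc] at hR
  obtain ⟨P', Y', rfl, hP, hY⟩ := psi_decode hR (by
    intro b Y' hb
    cases z2 with
    | nil => exact hR' _ _ hb
    | cons f z2 =>
      simp only [List.cons_append, List.cons.injEq] at hb hz1
      rw [← hb.1, hz1.1])
  obtain ⟨z', R'', rfl, hz, hR2⟩ := psi_decode hY.symm hR'
  exact ⟨z', ⟨P', R'', by simp⟩, by rw [hz]⟩

/-- A factor `z` of `ψ_c(u) c` with a period `p < |z|` extends, keeping the period, to a factor that
begins and ends with `c`; its first `p` letters are a rearrangement of those of `z`. In `ψ_c(u) c`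
every letter other than `c` has a `c` on both sides, and the period carries these neighbours along. -/
lemma psi_extend {c : α} {u z : List α} {p : ℕ} (h : z <:+: psi c u ++ [c])
    (hp : Per p z) (hp1 : 1 ≤ p) (hpz : p < z.length) :
    ∃ y, z <:+: y ∧ y <:+: psi c u ++ [c] ∧ Per p y ∧ (∃ y1, y = c :: y1) ∧
      (∃ y2, y = y2 ++ [c]) ∧ (y.take p).Perm (z.take p) ∧ p < y.length := by
  -- extension to the left
  have left : ∃ y, z <:+: y ∧ y <:+: psi c u ++ [c] ∧ Per p y ∧ (∃ y1, y = c :: y1) ∧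
      (y.take p).Perm (z.take p) ∧ p < y.length := by
    cases z with
    | nil => simp at hpz
    | cons b z1 =>
      by_cases hb : b = c
      · subst hb
        exact ⟨b :: z1, List.infix_rfl, h, hp, ⟨_, rfl⟩, List.Perm.refl _, hpz⟩
      obtain ⟨P, Q, h⟩ := h
      obtain ⟨P', rfl⟩ := psi_pred hb (u := u) (P := P) (R := z1 ++ Q) (by rw [← h]; simp)
      set z := b :: z1 with hz
      have hXY : z = z.take p ++ z.drop p := (List.take_append_drop _ _).symm
      obtain ⟨Y2, hY2⟩ := hp
      have hYne : z.drop p ≠ [] := by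
        intro h0
        have := congrArg List.length h0
        simp only [List.length_drop, List.length_nil] at this
        omega
      obtain ⟨b', Y', hY'⟩ := List.exists_cons_of_ne_nil hYne
      have hb' : b' = b := by
        rw [hY', hz] at hY2
        simp only [List.cons_append, List.cons.injEq] at hY2
        exact hY2.1
      subst hb'
      obtain ⟨X0, hX0⟩ := psi_pred hb (u := u) (P := P' ++ [c] ++ z.take p) (R := Y' ++ Q) (by
        rw [← h]; conv_lhs => rw [hXY]
        rw [hY']; simp)
      have hXne : z.take p ≠ [] := by
        intro h0
        have := congrArg List.length h0
        simp only [List.length_take, List.length_nil] at this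
        omega
      rcases List.eq_nil_or_concat (z.take p) with h0 | ⟨X1, f, hX1⟩
      · exact absurd h0 hXne
      have hf : f = c := by
        rw [hX1, List.concat_eq_append, ← List.append_assoc] at hX0
        simpa using List.append_inj_right' hX0 rfl
      subst hf
      rw [List.concat_eq_append] at hX1
      have hlX1 : X1.length + 1 = p := by
        have := congrArg List.length hX1
        simp only [List.length_take, List.length_append, List.length_singleton] at this
        omega
      refine ⟨f :: z, ⟨[f], [], by simp⟩, ⟨P', Q, by rw [← h]; simp⟩, ?_, ⟨_, rfl⟩, ?_, ?_⟩
      · have e : (f :: z).drop p = f :: z.drop p := by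
          conv_lhs => rw [hXY, hX1]
          rw [← hlX1]
          simp
        unfold Per
        rw [e]
        exact ⟨Y2, by rw [List.cons_append, hY2]⟩
      · have e : (f :: z).take p = f :: X1 := by
          conv_lhs => rw [hXY, hX1]
          rw [← hlX1]
          simp
        rw [e, hX1]
        exact (List.perm_append_singleton _ _).symm
      · simp; omega
  obtain ⟨z', hzz', h', hp', ⟨y1, hy1⟩, hperm, hlen⟩ := left
  rcases List.eq_nil_or_concat z' with rfl | ⟨z1, b, hz1⟩
  · simp at hlen
  rw [List.concat_eq_append] at hz1
  by_cases hb : b = c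
  · subst hb
    exact ⟨z', hzz', h', hp', ⟨_, hy1⟩, ⟨_, hz1⟩, hperm, hlen⟩
  obtain ⟨P, Q, h'⟩ := h'
  obtain ⟨Q', rfl⟩ := psi_succ hb (u := u) (P := P ++ z1) (R := Q) (by rw [← h', hz1]; simp)
  obtain ⟨Y2, hY2⟩ := hp'
  have hY2l : Y2.length = p := by
    have := congrArg List.length hY2
    simp only [List.length_append, List.length_drop] at this
    omega
  have hYb : ∃ Y0, z'.drop p = Y0 ++ [b] := by
    refine ⟨z1.drop p, ?_⟩
    rw [hz1, List.drop_append_of_le_length]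
    rw [hz1] at hlen; simp at hlen; omega
  obtain ⟨Y0, hY0⟩ := hYb
  obtain ⟨Y3, hY3⟩ := psi_succ hb (u := u) (P := P ++ Y0) (R := Y2 ++ c :: Q') (by
    rw [← h']; conv_lhs => rw [← hY2, hY0]
    simp)
  obtain ⟨Y4, hY4⟩ : ∃ Y4, Y2 = c :: Y4 := by
    cases Y2 with
    | nil => simp at hY2l; omega
    | cons f Y2 =>
      simp only [List.cons_append, List.cons.injEq] at hY3
      exact ⟨Y2, by rw [hY3.1]⟩
  refine ⟨z' ++ [c], hzz'.trans ⟨[], [c], by simp⟩, ⟨P, Q', by rw [← h']; simp⟩, ?_,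
    ⟨y1 ++ [c], by rw [hy1]; rfl⟩, ⟨z', rfl⟩, ?_, by simp; omega⟩
  · unfold Per
    rw [List.drop_append_of_le_length (by omega)]
    refine ⟨Y4 ++ [c], ?_⟩
    conv_rhs => rw [← hY2, hY4]
    simp
  · rw [List.take_append_of_le_length (by omega)]
    exact hperm

/-- Desubstitution of periods: if `ψ_c(z') c` has period `p`, then `p` is the length of the image
of a prefix of `z'` whose length is a period of `z'`. -/
lemma psi_per {c : α} {z' : List α} {p : ℕ} (hp : Per p (psi c z' ++ [c])) (hp1 : 1 ≤ p)
    (hlen : p < (psi c z' ++ [c]).length) :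
    ∃ p', Per p' z' ∧ 1 ≤ p' ∧ p' ≤ z'.length ∧ (psi c (z'.take p')) = (psi c z' ++ [c]).take p := by
  have hhead : ∃ v, psi c z' ++ [c] = c :: v := by
    cases z' with
    | nil => exact ⟨[], rfl⟩
    | cons e u => obtain ⟨v, hv⟩ := psi_cons_exists e c u; exact ⟨v ++ [c], by rw [hv]; rfl⟩
  obtain ⟨v, hv⟩ := hhead
  set z := psi c z' ++ [c] with hz
  have hXY : z = z.take p ++ z.drop p := (List.take_append_drop _ _).symm
  obtain ⟨Y2, hY2⟩ := hp
  have hYne : z.drop p ≠ [] := by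
    intro h0
    have := congrArg List.length h0
    simp only [List.length_drop, List.length_nil] at this
    omega
  obtain ⟨b, Y', hY'⟩ := List.exists_cons_of_ne_nil hYne
  have hb : b = c := by
    rw [hY', hv] at hY2
    simp only [List.cons_append, List.cons.injEq] at hY2
    exact hY2.1
  subst hb
  obtain ⟨R', hR, hR'⟩ := psi_strip (c := b) (u := z') (X := z.take p) (R := Y') (by
    rw [← hz, ← hY']; exact hXY)
  obtain ⟨X', Y'', hzz, hX, hRY⟩ := psi_decode hR hR'
  have hY'' : z.drop p = psi b Y'' ++ [b] := by
    have : z.take p ++ z.drop p = z.take p ++ (psi b Y'' ++ [b]) := by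
      rw [← hXY]
      exact hz.trans (by rw [hR, hRY, List.append_assoc])
    exact List.append_cancel_left this
  have hXne : X' ≠ [] := by
    rintro rfl
    have := congrArg List.length hX
    simp only [List.length_take, psi_nil, List.length_nil] at this
    omega
  refine ⟨X'.length, ?_, ?_, ?_, ?_⟩
  · obtain ⟨R2, hR2, hR2'⟩ := psi_strip (c := b) (u := z') (X := psi b Y'') (R := Y2) (by
      rw [← hz, ← hY2, hY'']; simp)
    obtain ⟨V, W, hVW, hV, hW⟩ := psi_decode hR2 hR2'
    have := psi_injective b hV
    subst this
    unfold Per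
    rw [hzz, List.drop_left, ← hzz]
    exact ⟨W, hVW.symm⟩
  · exact List.length_pos_iff.mpr hXne
  · rw [hzz]; simp
  · have e : z'.take X'.length = X' := by rw [hzz, List.take_left]
    rw [e, hX]

/-! ### Compositions of morphisms and palindromic prefixes -/

/-- The composition `ψ_{x 0} ∘ ⋯ ∘ ψ_{x (t-1)}` of the first `t` morphisms along the directive
sequence `x`. -/
noncomputable def Phi (x : ℕ → α) : ℕ → List α → List α
  | 0, w => w
  | t + 1, w => Phi x t (psi (x t) w)

/-- The image of the empty word under the composition of the maps `z ↦ ψ_{x i}(z) (x i)`, `i < t`,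
the map for `i = 0` being applied last. It is the `t`-th palindromic prefix (counted from the
empty one) of the standard episturmian word directed by `x`; that it is a palindrome is not used. -/
noncomputable def Pal (x : ℕ → α) : ℕ → List α
  | 0 => []
  | t + 1 => Phi x t [x t] ++ Pal x t

/-- `U x t n` is `ψ_{x t} ∘ ⋯ ∘ ψ_{x (t+n-1)}` applied to the letter `x (t+n)`: a prefix of the
standard word directed by the sequence `x` shifted by `t`. -/
noncomputable def U (x : ℕ → α) : ℕ → ℕ → List α
  | t, 0 => [x t]
  | t, n + 1 => psi (x t) (U x (t + 1) n)

lemma Phi_append (x : ℕ → α) (t : ℕ) (u v : List α) :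
    Phi x t (u ++ v) = Phi x t u ++ Phi x t v := by
  induction t generalizing u v with
  | zero => rfl
  | succ t ih => simp only [Phi, psi_append, ih]

@[simp] lemma Phi_nil (x : ℕ → α) (t : ℕ) : Phi x t [] = [] := by
  induction t with
  | zero => rfl
  | succ t ih => simpa [Phi] using ih

lemma Phi_cons (x : ℕ → α) (t : ℕ) (b : α) (v : List α) :
    Phi x t (b :: v) = Phi x t [b] ++ Phi x t v := Phi_append x t [b] v

lemma Phi_succ_self (x : ℕ → α) (t : ℕ) : Phi x (t + 1) [x t] = Phi x t [x t] := by
  simp [Phi, psi_cons_self]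

lemma Phi_succ_ne (x : ℕ → α) (t : ℕ) {b : α} (hb : b ≠ x t) :
    Phi x (t + 1) [b] = Phi x t [x t] ++ Phi x t [b] := by
  simp only [Phi, psi_cons_ne hb, psi_nil]
  exact Phi_append x t [x t] [b]

lemma Phi_single_pos (x : ℕ → α) (t : ℕ) (b : α) : 1 ≤ (Phi x t [b]).length := by
  induction t with
  | zero => simp [Phi]
  | succ t ih =>
    by_cases hb : b = x t
    · rw [hb, Phi_succ_self, ← hb]; exact ih
    · rw [Phi_succ_ne x t hb, List.length_append]; omega

lemma Phi_length_sum (x : ℕ → α) (t : ℕ) (w : List α) :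
    (Phi x t w).length = (w.map (fun b => (Phi x t [b]).length)).sum := by
  induction w with
  | nil => simp
  | cons b w ih => rw [Phi_cons, List.length_append, ih]; simp

lemma Phi_length_perm (x : ℕ → α) (t : ℕ) {u v : List α} (h : u.Perm v) :
    (Phi x t u).length = (Phi x t v).length := by
  rw [Phi_length_sum, Phi_length_sum]
  exact (h.map _).sum_eq

lemma pw_length (w : List α) (q : ℕ) : (pw w q).length = q * w.length := by
  induction q with
  | zero => simp [pw]
  | succ q ih => simp [pw, ih]; ring

lemma Phi_replicate (x : ℕ → α) (t : ℕ) (b : α) (e : ℕ) :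
    Phi x t (List.replicate e b) = pw (Phi x t [b]) e := by
  induction e with
  | zero => simp [pw]
  | succ e ih => rw [List.replicate_succ, Phi_cons, ih]; rfl

/-- The palindromic prefixes are short compared with the images of two distinct letters. Hence
a word of length at least `2 * p₀` inside `ψ(z) Pal`, where `p₀` is the length of the image of a word
with two distinct letters, forces `z` to be longer than its period. -/
lemma Pal_length_le (x : ℕ → α) (t : ℕ) {b c : α} (h : b ≠ c) :
    (Pal x t).length + 2 ≤ (Phi x t [b]).length + (Phi x t [c]).length := by
  induction t generalizing b c with
  | zero => simp [Pal, Phi]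
  | succ t ih =>
    have key : ∀ b c : α, b ≠ c → b ≠ x t → (Pal x (t + 1)).length + 2 ≤
        (Phi x (t + 1) [b]).length + (Phi x (t + 1) [c]).length := by
      intro b c h hb
      have h1 := ih h
      have h2 : (Phi x t [c]).length ≤ (Phi x (t + 1) [c]).length := by
        by_cases hc : c = x t
        · rw [hc, Phi_succ_self]
        · rw [Phi_succ_ne x t hc, List.length_append]; omega
      rw [Phi_succ_ne x t hb]
      simp only [Pal, List.length_append]
      omega
    by_cases hb : b = x t
    · have := key c b h.symm (fun hc => h (hb.trans hc.symm))
      omega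
    · exact key b c h hb

lemma Pal_length_lt (x : ℕ → α) (t : ℕ) {b : α} (h : t = 0 ∨ b ≠ x (t - 1)) :
    (Pal x t).length < 2 * (Phi x t [b]).length := by
  cases t with
  | zero => simp [Pal, Phi]
  | succ t =>
    have hb : b ≠ x t := by simpa using h
    have h1 := Pal_length_le x t hb
    have := Phi_single_pos x t b
    rw [Phi_succ_ne x t hb]
    simp only [Pal, List.length_append]
    omega

lemma Pal_prefix_single (x : ℕ → α) (t : ℕ) (b : α) : Pal x t <+: Phi x t [b] ++ Pal x t := by
  induction t generalizing b with
  | zero => simp [Pal]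
  | succ t ih =>
    by_cases hb : b = x t
    · rw [hb, Phi_succ_self]
      simp only [Pal]
      exact List.prefix_append_right_inj _ |>.mpr (ih _)
    · rw [Phi_succ_ne x t hb]
      simp only [Pal, List.append_assoc]
      refine List.prefix_append_right_inj _ |>.mpr ?_
      exact (ih b).trans (List.prefix_append_right_inj _ |>.mpr (ih _))

lemma Pal_isPrefix (x : ℕ → α) (t : ℕ) (w : List α) : Pal x t <+: Phi x t w ++ Pal x t := by
  induction w with
  | nil => simp
  | cons b w ih =>
    rw [Phi_cons, List.append_assoc]
    exact (Pal_prefix_single x t b).trans (List.prefix_append_right_inj _ |>.mpr ih)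

lemma Phi_Pal_isInfix (x : ℕ → α) (t : ℕ) {u v : List α} (h : u <:+: v) :
    Phi x t u ++ Pal x t <:+: Phi x t v ++ Pal x t := by
  obtain ⟨P, Q, rfl⟩ := h
  obtain ⟨R, hR⟩ := Pal_isPrefix x t Q
  exact ⟨Phi x t P, R, by simp only [Phi_append, List.append_assoc, hR]⟩

lemma Phi_Pal_succ (x : ℕ → α) (t : ℕ) (u : List α) :
    Phi x t (psi (x t) u ++ [x t]) ++ Pal x t = Phi x (t + 1) u ++ Pal x (t + 1) := by
  simp [Phi_append, Phi, Pal]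

/-! ### Descent to powers of a letter -/

lemma Per.mem_take {p : ℕ} {z : List α} (h : Per p z) (hp : 1 ≤ p) {y : α} (hy : y ∈ z) :
    y ∈ z.take p := by
  obtain ⟨R, hR⟩ := h
  have key : ∀ i, (hi : i < z.length) → z[i] ∈ z.take p := by
    intro i
    induction i using Nat.strong_induction_on with
    | _ i ih =>
      intro hi
      by_cases hip : i < p
      · rw [List.mem_take_iff_getElem]
        exact ⟨i, by omega, rfl⟩
      · have h1 := ih (i - p) (by omega) (by omega)
        have e : z[i - p]'(by omega) = z[i] := by
          have h2 : (z.drop p ++ R)[i - p]? = z[i - p]? := by rw [hR]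
          rw [List.getElem?_append_left (by simp; omega), List.getElem?_drop,
            show p + (i - p) = i by omega, List.getElem?_eq_getElem hi,
            List.getElem?_eq_getElem (by omega)] at h2
          exact (Option.some.inj h2).symm
        rw [← e]; exact h1
  obtain ⟨i, hi, rfl⟩ := List.mem_iff_getElem.mp hy
  exact key i hi

lemma sum_pair_le (f : α → ℕ) {w : List α} {b c : α} (hb : b ∈ w) (hc : c ∈ w) (h : b ≠ c) :
    f b + f c ≤ (w.map f).sum := by
  induction w with
  | nil => simp at hb
  | cons e w ih =>
    simp only [List.map_cons, List.sum_cons]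
    rcases List.mem_cons.mp hb with rfl | hb' <;> rcases List.mem_cons.mp hc with rfl | hc'
    · exact absurd rfl h
    · have := List.single_le_sum (l := w.map f) (by simp) _ (List.mem_map_of_mem hc')
      omega
    · have := List.single_le_sum (l := w.map f) (by simp) _ (List.mem_map_of_mem hb')
      omega
    · have := ih hb' hc'
      omega

/-- A word `z₀` with `|z₀| ≥ 2 p₀` that lies in `ψ(z) Pal`, where `z` has period `p` and `p₀` is
the length of the image of the prefix of `z` of length `p`, can be desubstituted as long as `z`
involves two letters. This ends with a power `b ^ e` of one letter `b`, which differs from the letter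
of the last morphism removed, and `p₀` is a multiple of the length of the image of `b`. -/
theorem descent (x : ℕ → α) (z₀ : List α) (p₀ : ℕ) (hz₀ : 2 * p₀ ≤ z₀.length) (n : ℕ) :
    ∀ (t : ℕ) (z : List α) (p : ℕ), z <:+: U x t n → Per p z → 1 ≤ p → p ≤ z.length →
      z₀ <:+: Phi x t z ++ Pal x t → p₀ = (Phi x t (z.take p)).length →
      (t = 0 ∨ ∃ y ∈ z, y ≠ x (t - 1)) →
      ∃ t' n' b e q, List.replicate e b <:+: U x t' n' ∧ 1 ≤ q ∧
        z₀ <:+: Phi x t' (List.replicate e b) ++ Pal x t' ∧ p₀ = q * (Phi x t' [b]).length ∧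
        (t' = 0 ∨ b ≠ x (t' - 1)) := by
  induction n with
  | zero =>
    intro t z p hz _ hp1 hpz h1 h2 h3
    have hlen := hz.length_le
    simp only [U, List.length_singleton] at hlen
    have hz1 : z = [x t] := hz.eq_of_length (by simp [U]; omega)
    subst hz1
    have : p = 1 := by simp at hpz; omega
    subst this
    exact ⟨t, 0, x t, 1, 1, hz, le_refl _, h1, by simpa using h2, by simpa using h3⟩
  | succ n ih =>
    intro t z p hz hper hp1 hpz h1 h2 h3
    by_cases hc : ∃ b, ∀ y ∈ z, y = b
    · obtain ⟨b, hb⟩ := hc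
      have hzb : z = List.replicate z.length b := List.eq_replicate_iff.mpr ⟨rfl, hb⟩
      refine ⟨t, n + 1, b, z.length, p, hzb ▸ hz, hp1, hzb ▸ h1, ?_, ?_⟩
      · rw [h2]
        conv_lhs => rw [hzb, List.take_replicate, Phi_replicate, pw_length]
        rw [Nat.min_eq_left hpz]
      · rcases h3 with h3 | ⟨y, hy, hyx⟩
        · exact Or.inl h3
        · exact Or.inr (hb y hy ▸ hyx)
    · push Not at hc
      obtain ⟨b, hb⟩ : ∃ b, b ∈ z := List.exists_mem_of_length_pos (by omega)
      obtain ⟨c, hcz, hcb⟩ := hc b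
      have hsum : (Phi x t [b]).length + (Phi x t [c]).length ≤ p₀ := by
        rw [h2, Phi_length_sum x t (z.take p)]
        exact sum_pair_le (fun b => (Phi x t [b]).length) (hper.mem_take hp1 hb)
          (hper.mem_take hp1 hcz) hcb.symm
      have hpal := Pal_length_le x t hcb.symm
      have hlt : p < z.length := by
        by_contra hge
        have : z.take p = z := List.take_of_length_le (by omega)
        rw [this] at h2
        have := h1.length_le
        rw [List.length_append] at this
        omega
      obtain ⟨y, hzy, hyW, hyper, hy1, hy2, hyperm, hylen⟩ :=
        psi_extend (c := x t) (u := U x (t + 1) n) (hz.trans ⟨[], [x t], rfl⟩) hper hp1 hlt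
      obtain ⟨z', hz', rfl⟩ := psi_factor hyW hy1 hy2
      obtain ⟨p', hp'per, hp'1, hp'len, hp'eq⟩ := psi_per hyper hp1 hylen
      refine ih (t + 1) z' p' hz' hp'per hp'1 hp'len ?_ ?_ ?_
      · rw [← Phi_Pal_succ]
        exact h1.trans (Phi_Pal_isInfix x t hzy)
      · rw [Phi, hp'eq, h2]
        exact (Phi_length_perm x t hyperm).symm
      · right
        have key : ∀ y ∈ z, y ≠ x t → ∃ y ∈ z', y ≠ x t := by
          intro y hy hyx
          have h4 := hzy.subset hy
          rw [List.mem_append] at h4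
          rcases h4 with h4 | h4
          · exact ⟨y, mem_of_mem_psi hyx h4, hyx⟩
          · simp at h4; exact absurd h4 hyx
        by_cases hbx : b = x t
        · exact key c hcz (fun h => hcb (h.trans hbx.symm))
        · exact key b hb hbx

/-! ### The language of the standard word -/

/-- A word is in the language of the standard word directed by `x` shifted by `t`. -/
def Lang (x : ℕ → α) (t : ℕ) (w : List α) : Prop := ∃ n, w <:+: U x t n

lemma U_prefix_succ (x : ℕ → α) (n t : ℕ) : U x t n <+: U x t (n + 1) := by
  induction n generalizing t with
  | zero =>
    obtain ⟨v, hv⟩ := psi_cons_exists (x (t + 1)) (x t) []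
    simp only [U, hv]
    exact ⟨v, rfl⟩
  | succ n ih => exact psi_isPrefix (ih (t + 1))

lemma U_isPrefix (x : ℕ → α) (t : ℕ) {n m : ℕ} (h : n ≤ m) : U x t n <+: U x t m := by
  induction h with
  | refl => exact List.prefix_rfl
  | step _ ih => exact ih.trans (U_prefix_succ x _ t)

lemma Phi_U (x : ℕ → α) (t n : ℕ) : Phi x t (U x t n) = U x 0 (t + n) := by
  induction t generalizing n with
  | zero => simp [Phi]
  | succ t ih =>
    have : Phi x (t + 1) (U x (t + 1) n) = Phi x t (U x t (n + 1)) := rfl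
    rw [this, ih]; congr 1; omega

/-- A power of the leading letter `x t` loses one letter under desubstitution. -/
lemma Lang_replicate_down {x : ℕ → α} {t : ℕ} {b : α} {e : ℕ} (hb : x t = b)
    (h : Lang x t (List.replicate (e + 2) b)) : Lang x (t + 1) (List.replicate (e + 1) b) := by
  obtain ⟨n, h⟩ := h
  subst hb
  cases n with
  | zero => have := h.length_le; simp [U] at this
  | succ n =>
    obtain ⟨z', hz', he⟩ := psi_factor (c := x t) (u := U x (t + 1) n)
      (h.trans ⟨[], [x t], rfl⟩) ⟨_, List.replicate_succ⟩ ⟨_, List.replicate_succ'⟩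
    rw [List.replicate_succ'] at he
    have h1 := List.append_cancel_right he
    have h2 : psi (x t) (List.replicate (e + 1) (x t)) = List.replicate (e + 1) (x t) := by
      generalize e + 1 = m
      induction m with
      | zero => rfl
      | succ m ih => rw [List.replicate_succ, psi_cons_self, ih]
    rw [← h2] at h1
    rw [psi_injective _ h1]
    exact ⟨n, hz'⟩

lemma Lang_replicate_ne {x : ℕ → α} {t : ℕ} {b : α} {e : ℕ} (hb : x t ≠ b)
    (h : Lang x t (List.replicate e b)) : e ≤ 1 := by
  by_contra he
  obtain ⟨e, rfl⟩ : ∃ f, e = f + 2 := ⟨e - 2, by omega⟩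
  obtain ⟨n, h⟩ := h
  cases n with
  | zero => have := h.length_le; simp [U] at this
  | succ n =>
    obtain ⟨P, Q, h⟩ := h.trans (⟨[], [x t], rfl⟩ : psi (x t) (U x (t + 1) n) <:+: _ ++ [x t])
    obtain ⟨R', hR⟩ := psi_succ (c := x t) (Ne.symm hb) (u := U x (t + 1) n) (P := P)
      (R := List.replicate (e + 1) b ++ Q) (by
        rw [List.nil_append] at h
        rw [← h]; simp [List.replicate_succ])
    simp [List.replicate_succ] at hR
    exact hb hR.1.symm

/-- A run of the letter `b` is at most one longer than the block of `b`s at the head of the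
directive sequence. -/
lemma Lang_replicate_bound {x : ℕ → α} {b : α} (c : ℕ) : ∀ {t e : ℕ}, (∀ i < c, x (t + i) = b) →
    x (t + c) ≠ b → Lang x t (List.replicate e b) → e ≤ c + 1 := by
  induction c with
  | zero => intro t e _ h1 h2; simpa using Lang_replicate_ne h1 h2
  | succ c ih =>
    intro t e h0 h1 h2
    by_cases he : e ≤ 1
    · omega
    obtain ⟨e, rfl⟩ : ∃ f, e = f + 2 := ⟨e - 2, by omega⟩
    have := ih (t := t + 1) (e := e + 1)
      (fun i hi => by have := h0 (i + 1) (by omega); rwa [show t + (i + 1) = t + 1 + i by omega] at this)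
      (by rwa [show t + (c + 1) = t + 1 + c by omega] at h1)
      (Lang_replicate_down (by simpa using h0 0 (by omega)) h2)
    omega

lemma U_extend {x : ℕ → α} (n : ℕ) : ∀ (t c : ℕ), x (t + n + c) ≠ x (t + n) →
    ∃ n' y, U x t n ++ [y] <+: U x t n' := by
  induction n with
  | zero =>
    intro t c
    induction c generalizing t with
    | zero => intro h; exact absurd rfl h
    | succ c ihc =>
      intro h
      by_cases h1 : x (t + 1) = x t
      · obtain ⟨n', y, hy⟩ := ihc (t + 1) (by
          rw [show t + 1 + 0 + c = t + 0 + (c + 1) by omega]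
          simpa [h1] using h)
        have h2 := psi_isPrefix (c := x t) hy
        obtain ⟨v, hv⟩ := psi_cons_exists y (x t) []
        simp only [U, h1, psi_append, psi_cons_self, psi_nil, hv] at h2
        exact ⟨n' + 1, x t, List.IsPrefix.trans ⟨v, by simp [U]⟩ h2⟩
      · exact ⟨1, x (t + 1), by simp [U, psi_cons_ne h1]⟩
  | succ n ih =>
    intro t c h
    obtain ⟨n', y, hy⟩ := ih (t + 1) c (by
      rwa [show t + 1 + n = t + (n + 1) by omega])
    have h2 := psi_isPrefix (c := x t) hy
    obtain ⟨v, hv⟩ := psi_cons_exists y (x t) []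
    rw [psi_append, hv] at h2
    exact ⟨n' + 1, x t, List.IsPrefix.trans ⟨v, by simp [U]⟩ h2⟩

/-- Factors of the shifted word lift along `u ↦ ψ(u) (x t)`; the trailing letter is the first
letter of the image of whatever follows `u`. -/
lemma Lang_up {x : ℕ → α} (hx : ∀ t, ∃ c, x (t + c) ≠ x t) {t : ℕ} {u : List α}
    (h : Lang x (t + 1) u) : Lang x t (psi (x t) u ++ [x t]) := by
  obtain ⟨n, P, Q, h⟩ := h
  obtain ⟨c, hc⟩ := hx (t + 1 + n)
  obtain ⟨n', y, hy⟩ := U_extend n (t + 1) c hc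
  have h2 := psi_isPrefix (c := x t) hy
  rw [← h] at h2
  have h3 : ∃ v, psi (x t) (Q ++ [y]) = x t :: v := by
    cases Q with
    | nil => exact psi_cons_exists _ _ _
    | cons f Q => exact psi_cons_exists _ _ _
  obtain ⟨v, hv⟩ := h3
  refine ⟨n' + 1, List.IsInfix.trans ⟨psi (x t) P, v, ?_⟩ h2.isInfix⟩
  rw [List.append_assoc (P ++ u), psi_append, hv]
  simp [psi_append]

lemma Lang_Phi_up {x : ℕ → α} (hx : ∀ t, ∃ c, x (t + c) ≠ x t) {t : ℕ} {u : List α}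
    (h : Lang x t u) : Lang x 0 (Phi x t u ++ Pal x t) := by
  induction t generalizing u with
  | zero => simpa [Phi, Pal] using h
  | succ t ih =>
    rw [← Phi_Pal_succ]
    exact ih (Lang_up hx h)

lemma Lang_letter {x : ℕ → α} (c : ℕ) : ∀ t, Lang x t [x (t + c)] := by
  induction c with
  | zero => intro t; exact ⟨0, List.infix_rfl⟩
  | succ c ih =>
    intro t
    obtain ⟨n, P, Q, h⟩ := ih (t + 1)
    rw [show t + 1 + c = t + (c + 1) by omega] at h
    refine ⟨n + 1, ?_⟩
    have h1 : x (t + (c + 1)) ∈ psi (x t) [x (t + (c + 1))] := by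
      by_cases hb : x (t + (c + 1)) = x t
      · rw [hb, psi_cons_self]; simp
      · rw [psi_cons_ne hb]; simp
    obtain ⟨P', Q', h2⟩ := List.append_of_mem h1
    refine ⟨psi (x t) P ++ P', Q' ++ psi (x t) Q, ?_⟩
    simp only [U, ← h, psi_append]
    rw [h2]; simp

lemma Lang_replicate_up {x : ℕ → α} (hx : ∀ t, ∃ c, x (t + c) ≠ x t) {b : α} (c : ℕ) :
    ∀ {t : ℕ}, (∀ i < c, x (t + i) = b) → Lang x (t + c) [b] →
      Lang x t (List.replicate (c + 1) b) := by
  induction c with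
  | zero => intro t _ h; simpa using h
  | succ c ih =>
    intro t h0 h
    have h1 := ih (t := t + 1)
      (fun i hi => by have := h0 (i + 1) (by omega); rwa [show t + (i + 1) = t + 1 + i by omega] at this)
      (by rwa [show t + (c + 1) = t + 1 + c by omega] at h)
    have h2 := Lang_up hx h1
    have hb : x t = b := by simpa using h0 0 (by omega)
    have h3 : ∀ m, psi b (List.replicate m b) = List.replicate m b := by
      intro m
      induction m with
      | zero => rfl
      | succ m ih => rw [List.replicate_succ, psi_cons_self, ih]
    rw [hb, h3] at h2
    rwa [List.replicate_succ']

/-- A factorization `X Y` of the image of `w` into nonempty commuting words desubstitutes to such a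
factorization of `w`. In particular images of letters are primitive. -/
lemma Phi_prim (x : ℕ → α) (t : ℕ) : ∀ (w : List α) (X Y : List α), X ≠ [] → Y ≠ [] →
    Phi x t w = X ++ Y → X ++ Y = Y ++ X →
    ∃ X' Y', X' ≠ [] ∧ Y' ≠ [] ∧ w = X' ++ Y' ∧ X' ++ Y' = Y' ++ X' := by
  induction t with
  | zero => intro w X Y hX hY h h1; exact ⟨X, Y, hX, hY, h, h1⟩
  | succ t ih =>
    intro w X Y hX hY h h1
    obtain ⟨X, Y, hX, hY, h, h1⟩ := ih (psi (x t) w) X Y hX hY h h1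
    obtain ⟨b, Y1, rfl⟩ := List.exists_cons_of_ne_nil hY
    have hb : b = x t := by
      cases w with
      | nil => rw [h1] at h; simp at h
      | cons f w =>
        obtain ⟨v, hv⟩ := psi_cons_exists f (x t) w
        rw [h1, hv] at h
        simp only [List.cons_append, List.cons.injEq] at h
        exact h.1.symm
    subst hb
    obtain ⟨X', Y', rfl, rfl, hY'⟩ := psi_decode h (by simp +contextual)
    rw [hY', ← psi_append, ← psi_append] at h1
    refine ⟨X', Y', ?_, ?_, rfl, psi_injective _ h1⟩
    · rintro rfl; exact hX rfl
    · rintro rfl; simp at hY'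

/-! ### Powers and conjugates -/

lemma getElem?_of_period {B W : List α} (hB : B ≠ []) (h : W <+: B ++ W) :
    ∀ i < W.length, W[i]? = B[i % B.length]? := by
  have hBl := List.length_pos_iff.mpr hB
  intro i
  induction i using Nat.strong_induction_on with
  | _ i ih =>
    intro hi
    obtain ⟨R, hR⟩ := h
    have e : W[i]? = (B ++ W)[i]? := by rw [← hR, List.getElem?_append_left hi]
    rw [e]
    by_cases hiB : i < B.length
    · rw [List.getElem?_append_left hiB, Nat.mod_eq_of_lt hiB]
    · rw [List.getElem?_append_right (by omega), ih (i - B.length) (by omega) (by omega),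
        ← Nat.mod_eq_sub_mod (by omega)]

lemma pw_comm (B : List α) (e : ℕ) : B ++ pw B e = pw B e ++ B := by
  induction e with
  | zero => simp [pw]
  | succ e ih => simp only [pw]; rw [List.append_assoc, ← ih]

lemma pw_isPrefix {B R : List α} (h : R <+: B ++ R) (e : ℕ) :
    pw B e ++ R <+: B ++ (pw B e ++ R) := by
  rw [← List.append_assoc, pw_comm, List.append_assoc]
  exact List.prefix_append_right_inj _ |>.mpr h

lemma getElem?_pw {B : List α} (hB : B ≠ []) (e : ℕ) {i : ℕ} (hi : i < e * B.length) :
    (pw B e)[i]? = B[i % B.length]? := by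
  refine getElem?_of_period hB ?_ i (by rwa [pw_length])
  have := pw_isPrefix (B := B) (R := []) (by simp) e
  simpa using this

lemma getElem?_pw_rotate {B : List α} (hB : B ≠ []) (q j : ℕ) {i : ℕ} (hi : i < q * B.length) :
    ((pw B q).rotate j)[i]? = B[(i + j) % B.length]? := by
  rw [List.getElem?_rotate (by rwa [pw_length]), pw_length, getElem?_pw hB,
    Nat.mod_mod_of_dvd _ (Dvd.intro_left q rfl)]
  exact Nat.mod_lt _ (by omega)

lemma eq_rotate_of_isInfix {B W w : List α} (hB : B ≠ []) (hW : W <+: B ++ W) {l q : ℕ}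
    (hl : 1 ≤ l) (hw : w.length = q * B.length) (hw0 : w ≠ []) {P Q : List α}
    (h : P ++ pw w l ++ Q = W) : w = (pw B q).rotate (P.length % B.length) := by
  apply List.ext_getElem?
  intro i
  by_cases hi : i < w.length
  · have hlw : w.length ≤ l * w.length := Nat.le_mul_of_pos_left _ hl
    have hlen : W.length = P.length + l * w.length + Q.length := by
      rw [← h]; simp [pw_length, Nat.add_assoc]
    rw [getElem?_pw_rotate hB q _ (hw ▸ hi), Nat.add_mod_mod, Nat.add_comm i,
      ← getElem?_of_period hB hW _ (by omega), ← h,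
      List.getElem?_append_left (by simp [pw_length]; omega),
      List.getElem?_append_right (by omega), Nat.add_sub_cancel_left,
      getElem?_pw hw0 l (by omega), Nat.mod_eq_of_lt hi]
  · rw [List.getElem?_eq_none (by omega), List.getElem?_eq_none]
    rw [List.length_rotate, pw_length]; omega

lemma infix_of_rotate {B W : List α} (hB : B ≠ []) (hW : W <+: B ++ W) {l q j : ℕ}
    (h : j + l * q * B.length ≤ W.length) : pw ((pw B q).rotate j) l <:+: W := by
  have hBl := List.length_pos_iff.mpr hB
  have hlen : (pw ((pw B q).rotate j) l).length = l * q * B.length := by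
    rw [pw_length, List.length_rotate, pw_length]; ring
  have e : pw ((pw B q).rotate j) l = (W.drop j).take (l * q * B.length) := by
    apply List.ext_getElem?
    intro i
    by_cases hi : i < l * q * B.length
    · have hq : 0 < q * B.length := by
        refine Nat.mul_pos (Nat.pos_of_ne_zero ?_) hBl
        rintro rfl; simp at hi
      have hne : (pw B q).rotate j ≠ [] := by
        intro h0
        have := congrArg List.length h0
        rw [List.length_rotate, pw_length, List.length_nil] at this
        omega
      rw [getElem?_pw hne l (by rw [List.length_rotate, pw_length, ← mul_assoc]; exact hi),
        List.length_rotate, pw_length, getElem?_pw_rotate hB q j (Nat.mod_lt _ hq),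
        List.getElem?_take_of_lt hi, List.getElem?_drop,
        getElem?_of_period hB hW _ (by omega), Nat.add_comm j,
        Nat.add_mod (i % _), Nat.mod_mod_of_dvd _ (Dvd.intro_left q rfl), ← Nat.add_mod]
    · rw [List.getElem?_eq_none (by omega), List.getElem?_eq_none]
      rw [List.length_take]; omega
  rw [e]
  exact List.IsInfix.trans (List.IsPrefix.isInfix ⟨_, List.take_append_drop _ _⟩) (List.drop_suffix _ _).isInfix

/-- The conjugates of `B ^ r` by less than `|B|` letters are distinct when `B` is primitive. -/
lemma rotate_inj_of_prim {B : List α} (hprim : ∀ X Y, X ≠ [] → Y ≠ [] → B = X ++ Y →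
    X ++ Y ≠ Y ++ X) {r : ℕ} (hr : 1 ≤ r) {i j : ℕ} (hi : i < B.length) (hj : j < B.length)
    (h : (pw B r).rotate i = (pw B r).rotate j) : i = j := by
  wlog hij : i ≤ j generalizing i j
  · exact (this hj hi h.symm (by omega)).symm
  by_contra hne
  have hB : B ≠ [] := by rintro rfl; simp at hi
  obtain ⟨c, rfl⟩ : ∃ c, j = c + i := ⟨j - i, by omega⟩
  rw [← List.rotate_rotate] at h
  have h1 := List.rotate_injective i h
  have hc : c < B.length := by omega
  have h2 : B = B.rotate c := by
    apply List.ext_getElem?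
    intro m
    by_cases hm : m < B.length
    · have hm' : m < r * B.length := lt_of_lt_of_le hm (Nat.le_mul_of_pos_left _ hr)
      have h3 := congrArg (fun w => w[m]?) h1
      rw [getElem?_pw_rotate hB r c hm', getElem?_pw hB r hm', Nat.mod_eq_of_lt hm] at h3
      rw [h3, List.getElem?_rotate hm]
    · rw [List.getElem?_eq_none (by omega), List.getElem?_eq_none]
      rw [List.length_rotate]; omega
  rw [List.rotate_eq_drop_append_take hc.le] at h2
  refine hprim (B.take c) (B.drop c) ?_ ?_ (List.take_append_drop _ _).symm ?_
  · intro h0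
    have := congrArg List.length h0
    rw [List.length_take, List.length_nil] at this; omega
  · intro h0
    have := congrArg List.length h0
    rw [List.length_drop, List.length_nil] at this; omega
  · rw [List.take_append_drop]; exact h2

/-! ### The directive sequence -/

/-- `T d n = d_1 + ⋯ + d_n`, the position where the `n`-th block of the directive sequence
(counted from `0`) starts. -/
def T (d : ℕ → ℕ) (n : ℕ) : ℕ := ∑ i ∈ Finset.range n, d (i + 1)

/-- The index of the block of the directive sequence containing position `i`. -/
def bl (d : ℕ → ℕ) (i : ℕ) : ℕ := Nat.findGreatest (fun n => T d n ≤ i) i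

/-- The directive sequence `a_1^{d_1} a_2^{d_2} ⋯ a_k^{d_k} a_1^{d_{k+1}} ⋯`. -/
def dir (k : ℕ) (a : ℕ → α) (d : ℕ → ℕ) (i : ℕ) : α := a (bl d i % k + 1)

lemma T_succ (d : ℕ → ℕ) (n : ℕ) : T d (n + 1) = T d n + d (n + 1) := Finset.sum_range_succ _ _

lemma T_mono (d : ℕ → ℕ) : Monotone (T d) :=
  monotone_nat_of_le_succ fun n => by rw [T_succ]; omega

lemma le_T {d : ℕ → ℕ} (hd : ∀ i, 1 ≤ i → 1 ≤ d i) (n : ℕ) : n ≤ T d n := by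
  induction n with
  | zero => omega
  | succ n ih => rw [T_succ]; have := hd (n + 1) (by omega); omega

lemma bl_le (d : ℕ → ℕ) (i : ℕ) : T d (bl d i) ≤ i :=
  Nat.findGreatest_spec (P := fun n => T d n ≤ i) (Nat.zero_le i) (by simp [T])

lemma lt_bl {d : ℕ → ℕ} (hd : ∀ i, 1 ≤ i → 1 ≤ d i) (i : ℕ) : i < T d (bl d i + 1) := by
  by_contra h
  have h1 := le_T hd (bl d i + 1)
  have := Nat.le_findGreatest (P := fun n => T d n ≤ i) (n := i) (m := bl d i + 1)
    (by omega) (by omega)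
  unfold bl at this
  omega

lemma bl_eq {d : ℕ → ℕ} (hd : ∀ i, 1 ≤ i → 1 ≤ d i) {i n : ℕ} (h1 : T d n ≤ i)
    (h2 : i < T d (n + 1)) : bl d i = n := by
  have h3 := bl_le d i
  have h4 := lt_bl hd i
  by_contra hne
  rcases Nat.lt_or_gt_of_ne hne with h | h
  · have := T_mono d (show bl d i + 1 ≤ n from h); omega
  · have := T_mono d (show n + 1 ≤ bl d i from h); omega

lemma dir_block {k : ℕ} {a : ℕ → α} {d : ℕ → ℕ} (hd : ∀ i, 1 ≤ i → 1 ≤ d i) (n j : ℕ)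
    (hj : j < d (n + 1)) : dir k a d (T d n + j) = a (n % k + 1) := by
  unfold dir
  rw [bl_eq hd (n := n) (by omega) (by rw [T_succ]; omega)]

lemma dir_T {k : ℕ} {a : ℕ → α} {d : ℕ → ℕ} (hd : ∀ i, 1 ≤ i → 1 ≤ d i) (n : ℕ) :
    dir k a d (T d n) = a (n % k + 1) := dir_block hd n 0 (hd _ (by omega))

lemma letter_ne {k : ℕ} (hk : 2 ≤ k) {a : ℕ → α}
    (ha : ∀ i j, 1 ≤ i → i ≤ k → 1 ≤ j → j ≤ k → a i = a j → i = j) {m n : ℕ} (h1 : n < m)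
    (h2 : m < n + k) : a (m % k + 1) ≠ a (n % k + 1) := by
  intro h
  have hm := Nat.mod_lt m (show 0 < k by omega)
  have hn := Nat.mod_lt n (show 0 < k by omega)
  have h3 := ha _ _ (by omega) (by omega) (by omega) (by omega) h
  have h4 : n ≡ m [MOD k] := by unfold Nat.ModEq; omega
  have h5 := (Nat.modEq_iff_dvd' h1.le).mp h4
  have := Nat.le_of_dvd (by omega) h5
  omega

lemma dir_nonconst {k : ℕ} (hk : 2 ≤ k) {a : ℕ → α}
    (ha : ∀ i j, 1 ≤ i → i ≤ k → 1 ≤ j → j ≤ k → a i = a j → i = j)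
    {d : ℕ → ℕ} (hd : ∀ i, 1 ≤ i → 1 ≤ d i) (t : ℕ) :
    ∃ c, dir k a d (t + c) ≠ dir k a d t := by
  have h := lt_bl hd t
  refine ⟨T d (bl d t + 1) - t, ?_⟩
  rw [Nat.add_sub_of_le h.le, dir_T hd]
  exact letter_ne hk ha (by omega) (by omega)

lemma Phi_block_self {x : ℕ → α} {t : ℕ} {b : α} (c : ℕ) (h : ∀ j < c, x (t + j) = b) :
    Phi x (t + c) [b] = Phi x t [b] := by
  induction c with
  | zero => rfl
  | succ c ih =>
    have hb := h c (by omega)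
    have := Phi_succ_self x (t + c)
    rw [hb] at this
    rw [← ih (fun j hj => h j (by omega)), ← this]; rfl

lemma Phi_block_ne {x : ℕ → α} {t : ℕ} {b y : α} (hy : y ≠ b) (c : ℕ)
    (h : ∀ j < c, x (t + j) = b) :
    Phi x (t + c) [y] = pw (Phi x t [b]) c ++ Phi x t [y] := by
  induction c with
  | zero => rfl
  | succ c ih =>
    have hb := h c (by omega)
    have := Phi_succ_ne x (t + c) (b := y) (by rwa [hb])
    rw [hb, Phi_block_self c (fun j hj => h j (by omega)),
      ih (fun j hj => h j (by omega))] at this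
    rw [← Nat.add_assoc, this]
    simp only [pw, List.append_assoc]

lemma Pal_block {x : ℕ → α} {t : ℕ} {b : α} (c : ℕ) (h : ∀ j < c, x (t + j) = b) :
    Pal x (t + c) = pw (Phi x t [b]) c ++ Pal x t := by
  induction c with
  | zero => rfl
  | succ c ih =>
    have hb := h c (by omega)
    rw [← Nat.add_assoc]
    simp only [Pal]
    rw [hb, Phi_block_self c (fun j hj => h j (by omega)), ih (fun j hj => h j (by omega))]
    simp only [pw, List.append_assoc]

/-! ### The words s_n as images of letters -/

/-- The image of the letter of block `m`, which is `a_{(m mod k) + 1}`, under the morphisms of the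
blocks `0, …, m - 1`; it equals `s_m`. -/
noncomputable def sg (k : ℕ) (a : ℕ → α) (d : ℕ → ℕ) (m : ℕ) : List α :=
  Phi (dir k a d) (T d m) [a (m % k + 1)]

lemma Phi_block_expand {k : ℕ} {a : ℕ → α} {d : ℕ → ℕ} (hd : ∀ i, 1 ≤ i → 1 ≤ d i) (n : ℕ)
    {y : α} (hy : y ≠ a (n % k + 1)) :
    Phi (dir k a d) (T d (n + 1)) [y] =
      pw (sg k a d n) (d (n + 1)) ++ Phi (dir k a d) (T d n) [y] := by
  rw [T_succ]
  exact Phi_block_ne hy _ (fun j hj => dir_block hd n j hj)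

lemma Pal_T_succ {k : ℕ} {a : ℕ → α} {d : ℕ → ℕ} (hd : ∀ i, 1 ≤ i → 1 ≤ d i) (n : ℕ) :
    Pal (dir k a d) (T d (n + 1)) = pw (sg k a d n) (d (n + 1)) ++ Pal (dir k a d) (T d n) := by
  rw [T_succ]
  exact Pal_block _ (fun j hj => dir_block hd n j hj)

/-- Peeling off `J < k` blocks of morphisms from the image of a letter gives the first `J` factors in
the recursion for `s_m`. -/
lemma sg_expand {k : ℕ} (hk : 2 ≤ k) {a : ℕ → α}
    (ha : ∀ i j, 1 ≤ i → i ≤ k → 1 ≤ j → j ≤ k → a i = a j → i = j)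
    {d : ℕ → ℕ} (hd : ∀ i, 1 ≤ i → 1 ≤ d i) (m J : ℕ) (hJ : J + 1 ≤ k) (hJm : J ≤ m) :
    sg k a d m = ((List.range J).map (fun j => pw (sg k a d (m - 1 - j)) (d (m - j)))).flatten ++
      Phi (dir k a d) (T d (m - J)) [a (m % k + 1)] := by
  induction J with
  | zero => simp [sg]
  | succ J ih =>
    rw [ih (by omega) (by omega), List.range_succ]
    obtain ⟨n, hn⟩ : ∃ n, m - J = n + 1 := ⟨m - J - 1, by omega⟩
    rw [hn, Phi_block_expand hd n (letter_ne hk ha (by omega) (by omega))]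
    simp only [List.map_append, List.map_cons, List.map_nil, List.flatten_append,
      List.flatten_cons, List.flatten_nil, List.append_nil, List.append_assoc]
    rw [show m - 1 - J = n by omega, hn, show m - (J + 1) = n by omega]

lemma Phi_cycle {k : ℕ} (hk : 2 ≤ k) {a : ℕ → α} {d : ℕ → ℕ} (hd : ∀ i, 1 ≤ i → 1 ≤ d i)
    (m : ℕ) (hm : k ≤ m) :
    Phi (dir k a d) (T d (m - (k - 1))) [a (m % k + 1)] = sg k a d (m - k) := by
  have e : m % k = (m - k) % k := by
    rw [← Nat.mod_eq_sub_mod hm]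
  rw [show m - (k - 1) = m - k + 1 by omega, e, T_succ]
  exact Phi_block_self _ (fun j hj => dir_block hd _ j hj)

lemma S_small {k : ℕ} {a : ℕ → α} {d : ℕ → ℕ} {m : ℕ} (h : m < k) :
    S k a d m = [a ((m + 1) % k + 1)] := by
  rw [S, dif_pos (by omega)]

theorem s_eq_sg {k : ℕ} (hk : 2 ≤ k) {a : ℕ → α}
    (ha : ∀ i j, 1 ≤ i → i ≤ k → 1 ≤ j → j ≤ k → a i = a j → i = j)
    {d : ℕ → ℕ} (hd0 : d 0 = 0) (hd : ∀ i, 1 ≤ i → 1 ≤ d i) (m : ℕ) :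
    s k a d m = sg k a d m := by
  induction m using Nat.strong_induction_on with
  | _ m ih =>
    rcases Nat.eq_zero_or_pos m with rfl | hm
    · unfold s
      rw [S_small (by omega), show 0 + (k - 1) + 1 = k by omega]
      simp [sg, T, Phi]
    have h1 : s k a d m = ((List.range (k - 1)).map
        (fun j => pw (S k a d (m + (k - 1) - 1 - j)) (d (m - j)))).flatten ++
        S k a d (m - 1) := by
      unfold s
      rw [S, dif_neg (by omega)]
      rw [show m + (k - 1) - max k 1 = m - 1 by omega, show m + (k - 1) + 1 - k = m by omega]
    have hterm : ∀ j, j < m → S k a d (m + (k - 1) - 1 - j) = sg k a d (m - 1 - j) := by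
      intro j hj
      rw [← ih (m - 1 - j) (by omega)]
      unfold s
      congr 1; omega
    rw [h1]
    by_cases hmk : k ≤ m
    · rw [sg_expand hk ha hd m (k - 1) (by omega) (by omega), Phi_cycle hk hd m hmk,
        ← ih (m - k) (by omega)]
      congr 1
      · congr 1
        apply List.map_congr_left
        intro j hj
        rw [List.mem_range] at hj
        rw [hterm j (by omega)]
      · unfold s; congr 1; omega
    · rw [sg_expand hk ha hd m m (by omega) le_rfl, S_small (by omega),
        show m - 1 + 1 = m by omega, Nat.sub_self]
      congr 1
      rw [show k - 1 = m + (k - 1 - m) by omega, List.range_add, List.map_append,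
        List.flatten_append]
      have h2 : (List.map (fun j => pw (S k a d (m + (m + (k - 1 - m)) - 1 - j)) (d (m - j)))
          (List.map (fun x => m + x) (List.range (k - 1 - m)))).flatten = [] := by
        rw [List.flatten_eq_nil_iff]
        intro w hw
        simp only [List.map_map, List.mem_map, Function.comp] at hw
        obtain ⟨j, _, rfl⟩ := hw
        rw [show m - (m + j) = 0 by omega, hd0]; rfl
      rw [h2, List.append_nil]
      congr 1
      apply List.map_congr_left
      intro j hj
      rw [List.mem_range] at hj
      rw [show m + (m + (k - 1 - m)) - 1 - j = m + (k - 1) - 1 - j by omega, hterm j hj]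

lemma sg_eq_U {k : ℕ} {a : ℕ → α} {d : ℕ → ℕ} (hd : ∀ i, 1 ≤ i → 1 ≤ d i) (m : ℕ) :
    sg k a d m = U (dir k a d) 0 (T d m) := by
  rw [← Nat.add_zero (T d m), ← Phi_U]
  simp [U, sg, dir_T hd]

lemma FactorS_iff {k : ℕ} (hk : 2 ≤ k) {a : ℕ → α}
    (ha : ∀ i j, 1 ≤ i → i ≤ k → 1 ≤ j → j ≤ k → a i = a j → i = j)
    {d : ℕ → ℕ} (hd0 : d 0 = 0) (hd : ∀ i, 1 ≤ i → 1 ≤ d i) (w : List α) :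
    FactorS k a d w ↔ Lang (dir k a d) 0 w := by
  constructor
  · rintro ⟨N, h⟩
    exact ⟨T d N, by rwa [s_eq_sg hk ha hd0 hd, sg_eq_U hd] at h⟩
  · rintro ⟨n, h⟩
    refine ⟨n, ?_⟩
    rw [s_eq_sg hk ha hd0 hd, sg_eq_U hd]
    exact h.trans (U_isPrefix _ 0 (le_T hd n)).isInfix

lemma D_length {k : ℕ} (hk : 2 ≤ k) {a : ℕ → α}
    (ha : ∀ i j, 1 ≤ i → i ≤ k → 1 ≤ j → j ≤ k → a i = a j → i = j)
    {d : ℕ → ℕ} (hd0 : d 0 = 0) (hd : ∀ i, 1 ≤ i → 1 ≤ d i) (n : ℕ) :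
    (D k a d n).length + (sg k a d n).length = (Pal (dir k a d) (T d (n + 1))).length := by
  have key : ∀ J ≤ n, Pal (dir k a d) (T d n) =
      ((List.range J).map (fun j => pw (s k a d (n - 1 - j)) (d (n - j)))).flatten ++
        Pal (dir k a d) (T d (n - J)) := by
    intro J
    induction J with
    | zero => simp
    | succ J ih =>
      intro hJ
      rw [ih (by omega), List.range_succ]
      obtain ⟨m, hm⟩ : ∃ m, n - J = m + 1 := ⟨n - J - 1, by omega⟩
      rw [hm, Pal_T_succ hd]
      simp only [List.map_append, List.map_cons, List.map_nil, List.flatten_append,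
        List.flatten_cons, List.flatten_nil, List.append_nil, List.append_assoc]
      rw [show n - 1 - J = m by omega, hm, show n - (J + 1) = m by omega, s_eq_sg hk ha hd0 hd]
  have h0 := key n le_rfl
  rw [Nat.sub_self, show Pal (dir k a d) (T d 0) = [] from rfl, List.append_nil] at h0
  unfold D
  rw [← h0, Pal_T_succ hd, s_eq_sg hk ha hd0 hd, List.length_append, List.length_append,
    pw_length, pw_length]
  obtain ⟨e, he⟩ : ∃ e, d (n + 1) = e + 1 := ⟨d (n + 1) - 1, by have := hd (n + 1) (by omega); omega⟩
  rw [he, Nat.add_sub_cancel]; ring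

lemma sg_Pal {k : ℕ} (hk : 2 ≤ k) {a : ℕ → α}
    (ha : ∀ i j, 1 ≤ i → i ≤ k → 1 ≤ j → j ≤ k → a i = a j → i = j)
    {d : ℕ → ℕ} (hd : ∀ i, 1 ≤ i → 1 ≤ d i) (m J : ℕ) (hJ : J + 1 ≤ k) (hJm : J ≤ m) :
    (sg k a d m).length + (Pal (dir k a d) (T d (m - J))).length =
      (Phi (dir k a d) (T d (m - J)) [a (m % k + 1)]).length +
        (Pal (dir k a d) (T d m)).length := by
  induction J with
  | zero => rfl
  | succ J ih =>
    have h1 := ih (by omega) (by omega)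
    obtain ⟨n, hn⟩ : ∃ n, m - J = n + 1 := ⟨m - J - 1, by omega⟩
    rw [hn, Phi_block_expand hd n (letter_ne hk ha (by omega) (by omega)), Pal_T_succ hd,
      List.length_append, List.length_append] at h1
    rw [show m - (J + 1) = n by omega]
    omega

/-- For `m ≥ k` the palindromic prefix preceding block `m` is longer than `s_m` by `|D_{m-k}|`. -/
lemma Pal_T_length {k : ℕ} (hk : 2 ≤ k) {a : ℕ → α}
    (ha : ∀ i j, 1 ≤ i → i ≤ k → 1 ≤ j → j ≤ k → a i = a j → i = j)
    {d : ℕ → ℕ} (hd0 : d 0 = 0) (hd : ∀ i, 1 ≤ i → 1 ≤ d i) (m : ℕ) (hm : k ≤ m) :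
    (Pal (dir k a d) (T d m)).length = (sg k a d m).length + (D k a d (m - k)).length := by
  have h1 := sg_Pal hk ha hd m (k - 1) (by omega) (by omega)
  rw [Phi_cycle hk hd m hm, show m - (k - 1) = m - k + 1 by omega] at h1
  have h2 := D_length hk ha hd0 hd (m - k)
  omega

lemma Pal_T_length_small {k : ℕ} (hk : 2 ≤ k) {a : ℕ → α}
    (ha : ∀ i j, 1 ≤ i → i ≤ k → 1 ≤ j → j ≤ k → a i = a j → i = j)
    {d : ℕ → ℕ} (hd : ∀ i, 1 ≤ i → 1 ≤ d i) (m : ℕ) (hm : m < k) :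
    (Pal (dir k a d) (T d m)).length < (sg k a d m).length := by
  have h1 := sg_Pal hk ha hd m m (by omega) le_rfl
  rw [Nat.sub_self] at h1
  simp [T, Phi, Pal] at h1
  simp only [T]
  omega

lemma sg_pos (k : ℕ) (a : ℕ → α) (d : ℕ → ℕ) (m : ℕ) : 1 ≤ (sg k a d m).length :=
  Phi_single_pos _ _ _

lemma sg_lt_succ {k : ℕ} (hk : 2 ≤ k) {a : ℕ → α}
    (ha : ∀ i j, 1 ≤ i → i ≤ k → 1 ≤ j → j ≤ k → a i = a j → i = j)
    {d : ℕ → ℕ} (hd : ∀ i, 1 ≤ i → 1 ≤ d i) (m : ℕ) :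
    d (m + 1) * (sg k a d m).length < (sg k a d (m + 1)).length := by
  unfold sg
  rw [Phi_block_expand hd m (letter_ne hk ha (by omega) (by omega)), List.length_append, pw_length]
  have := Phi_single_pos (dir k a d) (T d m) (a ((m + 1) % k + 1))
  unfold sg
  omega

lemma sg_strictMono {k : ℕ} (hk : 2 ≤ k) {a : ℕ → α}
    (ha : ∀ i j, 1 ≤ i → i ≤ k → 1 ≤ j → j ≤ k → a i = a j → i = j)
    {d : ℕ → ℕ} (hd : ∀ i, 1 ≤ i → 1 ≤ d i) : StrictMono (fun m => (sg k a d m).length) :=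
  strictMono_nat_of_lt_succ fun m =>
    lt_of_le_of_lt (Nat.le_mul_of_pos_left _ (hd _ (by omega))) (sg_lt_succ hk ha hd m)

/-! ### Runs and cubes -/

/-- The word `s_m ^ e` followed by the palindromic prefix that precedes block `m`; it has period
`|s_m|`. For `e = d_{m+1} + 1` it is the longest such word in the language. -/
noncomputable def run (k : ℕ) (a : ℕ → α) (d : ℕ → ℕ) (m e : ℕ) : List α :=
  pw (sg k a d m) e ++ Pal (dir k a d) (T d m)

lemma run_period (k : ℕ) (a : ℕ → α) (d : ℕ → ℕ) (m e : ℕ) :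
    run k a d m e <+: sg k a d m ++ run k a d m e :=
  pw_isPrefix (Pal_prefix_single _ _ _) e

lemma run_factor {k : ℕ} (hk : 2 ≤ k) {a : ℕ → α}
    (ha : ∀ i j, 1 ≤ i → i ≤ k → 1 ≤ j → j ≤ k → a i = a j → i = j)
    {d : ℕ → ℕ} (hd : ∀ i, 1 ≤ i → 1 ≤ d i) (m : ℕ) :
    Lang (dir k a d) 0 (run k a d m (d (m + 1) + 1)) := by
  have hx := dir_nonconst hk ha hd
  have h1 : Lang (dir k a d) (T d m + d (m + 1)) [a (m % k + 1)] := by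
    have h2 := Lang_letter (x := dir k a d) (T d (m + k) - T d (m + 1)) (T d (m + 1))
    rwa [Nat.add_sub_of_le (T_mono d (by omega)), dir_T hd, Nat.add_mod_right, T_succ] at h2
  have h3 := Lang_Phi_up hx (Lang_replicate_up hx (d (m + 1)) (fun i hi => dir_block hd m i hi) h1)
  rwa [Phi_replicate] at h3

/-- Every power of exponent at least `3` is a conjugate of a power of some `s_m`, with the
total exponent `l * q` at most `d_{m+1} + 2`; the extreme exponent leaves only the conjugates by at
most `|D_{m-k}|` letters. For `m < k`, where `m - k` truncates, the extreme exponent does not occur,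
so the last conjunct is vacuous. -/
theorem cube_structure {k : ℕ} (hk : 2 ≤ k) {a : ℕ → α}
    (ha : ∀ i j, 1 ≤ i → i ≤ k → 1 ≤ j → j ≤ k → a i = a j → i = j)
    {d : ℕ → ℕ} (hd0 : d 0 = 0) (hd : ∀ i, 1 ≤ i → 1 ≤ d i) {l : ℕ} (hl : 3 ≤ l)
    {w : List α} (hw : w ≠ []) (h : Lang (dir k a d) 0 (pw w l)) :
    ∃ m q j, 1 ≤ q ∧ w.length = q * (sg k a d m).length ∧ l * q ≤ d (m + 1) + 2 ∧
      j < (sg k a d m).length ∧ w = (pw (sg k a d m) q).rotate j ∧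
      (l * q = d (m + 1) + 2 → j ≤ (D k a d (m - k)).length) := by
  have hwl := List.length_pos_iff.mpr hw
  obtain ⟨n, h⟩ := h
  have hlw : w.length ≤ (pw w l).length := by
    rw [pw_length]; exact Nat.le_mul_of_pos_left _ (by omega)
  have hper : Per w.length (pw w l) := by
    obtain ⟨l', rfl⟩ : ∃ l', l = l' + 1 := ⟨l - 1, by omega⟩
    unfold Per
    simp only [pw, List.drop_left]
    exact ⟨w, (pw_comm w l').symm⟩
  have htake : (pw w l).take w.length = w := by
    obtain ⟨l', rfl⟩ : ∃ l', l = l' + 1 := ⟨l - 1, by omega⟩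
    simp [pw]
  obtain ⟨t, n', b, e, q, hrep, hq, hz, hp, ht⟩ := descent (dir k a d) (pw w l) w.length
    (by rw [pw_length]; exact Nat.mul_le_mul_right _ (by omega)) n 0 (pw w l) w.length h hper hwl
    hlw (by simp [Phi, Pal]) (by rw [htake]; rfl) (Or.inl rfl)
  have hL : Lang (dir k a d) t (List.replicate e b) := ⟨n', hrep⟩
  have hpal := Pal_length_lt (dir k a d) t ht
  have hb1 := Phi_single_pos (dir k a d) t b
  have hlen := hz.length_le
  rw [pw_length, List.length_append, Phi_replicate, pw_length, hp, ← mul_assoc] at hlen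
  -- `l * q ≤ e + 1`, since the palindromic prefix is shorter than two images of `b`
  have hlq : l * q < e + 2 := by
    by_contra hcon
    have := Nat.mul_le_mul_right (Phi (dir k a d) t [b]).length (Nat.le_of_not_lt hcon)
    rw [Nat.add_mul] at this
    omega
  have hlq3 : 3 ≤ l * q := le_trans hl (Nat.le_mul_of_pos_right _ hq)
  have hbx : dir k a d t = b := by
    by_contra hne
    have := Lang_replicate_ne hne hL
    omega
  -- `t` is the start of a block, hence `b` is the letter attached to some `s_m`
  obtain ⟨m, rfl⟩ : ∃ m, t = T d m := by
    refine ⟨bl d t, ?_⟩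
    have h1 := bl_le d t
    have h2 := lt_bl hd t
    by_contra hne
    rcases ht with ht | ht
    · omega
    · apply ht
      rw [← hbx]
      unfold dir
      rw [bl_eq hd (i := t - 1) (n := bl d t) (by omega) (by omega)]
  have hbm : b = a (m % k + 1) := by rw [← hbx, dir_T hd]
  have he : e ≤ d (m + 1) + 1 := by
    refine Lang_replicate_bound (d (m + 1)) (fun i hi => ?_) ?_ hL
    · rw [dir_block hd m i hi, hbm]
    · rw [← T_succ, dir_T hd, hbm]
      exact letter_ne hk ha (by omega) (by omega)
  rw [hbm, Phi_replicate] at hz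
  rw [hbm] at hp hlen
  change pw w l <:+: run k a d m e at hz
  change w.length = q * (sg k a d m).length at hp
  change _ ≤ e * (sg k a d m).length + _ at hlen
  obtain ⟨P, Q, hz⟩ := hz
  have hne : sg k a d m ≠ [] := List.length_pos_iff.mp (sg_pos k a d m)
  refine ⟨m, q, P.length % (sg k a d m).length, hq, hp, by omega,
    Nat.mod_lt _ (sg_pos k a d m),
    eq_rotate_of_isInfix hne (run_period k a d m e) (by omega) hp hw hz, ?_⟩
  intro hmax
  have hmod := Nat.mod_le P.length (sg k a d m).length
  have he1 : e + 1 = l * q := by omega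
  have hzl := congrArg List.length hz
  rw [List.length_append, List.length_append, pw_length, hp, ← mul_assoc, ← he1, run,
    List.length_append, pw_length, Nat.add_mul] at hzl
  by_cases hmk : k ≤ m
  · have := Pal_T_length hk ha hd0 hd m hmk
    omega
  · have := Pal_T_length_small hk ha hd m (by omega)
    omega

/-! ### Words of the two kinds of lengths -/

lemma sg_prim (k : ℕ) (a : ℕ → α) (d : ℕ → ℕ) (m : ℕ) (X Y : List α) (hX : X ≠ []) (hY : Y ≠ [])
    (h : sg k a d m = X ++ Y) : X ++ Y ≠ Y ++ X := by
  intro h1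
  obtain ⟨X', Y', hX', hY', h2, _⟩ := Phi_prim _ _ _ X Y hX hY h h1
  have h3 := congrArg List.length h2
  have := List.length_pos_iff.mpr hX'
  have := List.length_pos_iff.mpr hY'
  simp at h3
  omega

lemma rotate_factor {k : ℕ} (hk : 2 ≤ k) {a : ℕ → α}
    (ha : ∀ i j, 1 ≤ i → i ≤ k → 1 ≤ j → j ≤ k → a i = a j → i = j)
    {d : ℕ → ℕ} (hd : ∀ i, 1 ≤ i → 1 ≤ d i) {m l q j : ℕ}
    (h : j + l * q * (sg k a d m).length ≤
      (d (m + 1) + 1) * (sg k a d m).length + (Pal (dir k a d) (T d m)).length) :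
    Lang (dir k a d) 0 (pw ((pw (sg k a d m) q).rotate j) l) := by
  obtain ⟨n, hn⟩ := run_factor hk ha hd m
  refine ⟨n, List.IsInfix.trans (infix_of_rotate (List.length_pos_iff.mp (sg_pos k a d m))
    (run_period k a d m _) ?_) hn⟩
  rwa [run, List.length_append, pw_length]

/-- The lengths in question determine the index and the exponent of a cube. -/
lemma index_unique {k : ℕ} (hk : 2 ≤ k) {a : ℕ → α}
    (ha : ∀ i j, 1 ≤ i → i ≤ k → 1 ≤ j → j ≤ k → a i = a j → i = j)
    {d : ℕ → ℕ} (hd : ∀ i, 1 ≤ i → 1 ≤ d i) {l m n q L : ℕ} (hl : 3 ≤ l) (hq : 1 ≤ q)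
    (hlq : l * q ≤ d (m + 1) + 2) (hL : L = q * (sg k a d m).length)
    (h1 : (sg k a d n).length ≤ L) (h2 : L < (sg k a d (n + 1)).length) : m = n := by
  have hmono := sg_strictMono hk ha hd
  have h3 := Nat.mul_le_mul_right q hl
  have hqd : q ≤ d (m + 1) := by omega
  have h4 := Nat.mul_le_mul_right (sg k a d m).length hqd
  have h5 := sg_lt_succ hk ha hd m
  have h6 : (sg k a d m).length ≤ q * (sg k a d m).length := Nat.le_mul_of_pos_left _ hq
  have h7 : m < n + 1 := hmono.lt_iff_lt.mp (show (sg k a d m).length < _ by omega)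
  have h8 : n < m + 1 := hmono.lt_iff_lt.mp (show (sg k a d n).length < _ by omega)
  omega

/-- Roots of `l`-th powers of length `r * |s_n|` are conjugates of `s_n ^ r`. -/
lemma part_one {k : ℕ} (hk : 2 ≤ k) {a : ℕ → α}
    (ha : ∀ i j, 1 ≤ i → i ≤ k → 1 ≤ j → j ≤ k → a i = a j → i = j)
    {d : ℕ → ℕ} (hd0 : d 0 = 0) (hd : ∀ i, 1 ≤ i → 1 ≤ d i) {l : ℕ} (hl : 3 ≤ l)
    {n r : ℕ} (hr : 1 ≤ r) (hrd : r ≤ d (n + 1)) {w : List α}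
    (hw : w.length = r * (s k a d n).length) (hf : FactorS k a d (pw w l)) :
    l * r ≤ d (n + 1) + 2 ∧ ∃ j, j < (s k a d n).length ∧ w = (pw (s k a d n) r).rotate j ∧
      (l * r = d (n + 1) + 2 → j ≤ (D k a d (n - k)).length) := by
  rw [s_eq_sg hk ha hd0 hd] at hw ⊢
  rw [FactorS_iff hk ha hd0 hd] at hf
  have hpos := sg_pos k a d n
  have h1 : (sg k a d n).length ≤ w.length := by
    rw [hw]; exact Nat.le_mul_of_pos_left _ hr
  have h2 : w.length < (sg k a d (n + 1)).length := by
    rw [hw]; exact lt_of_le_of_lt (Nat.mul_le_mul_right _ hrd) (sg_lt_succ hk ha hd n)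
  obtain ⟨m, q, j, hq, hwq, hlq, hj, hwj, hmax⟩ :=
    cube_structure hk ha hd0 hd hl (List.length_pos_iff.mp (by omega)) hf
  obtain rfl := index_unique hk ha hd hl hq hlq hwq h1 h2
  obtain rfl : q = r := Nat.eq_of_mul_eq_mul_right hpos (hwq.symm.trans hw)
  exact ⟨hlq, j, hj, hwj, hmax⟩

/-- The conjugates in question are roots of `l`-th powers: the run with period `|s_n|` has length
`(d_{n+1} + 2) |s_n| + |D_{n-k}|`. -/
lemma part_one_conv {k : ℕ} (hk : 2 ≤ k) {a : ℕ → α}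
    (ha : ∀ i j, 1 ≤ i → i ≤ k → 1 ≤ j → j ≤ k → a i = a j → i = j)
    {d : ℕ → ℕ} (hd0 : d 0 = 0) (hd : ∀ i, 1 ≤ i → 1 ≤ d i) {l n r j : ℕ} (hn : k ≤ n)
    (h : (j < (s k a d n).length ∧ l * r < d (n + 1) + 2) ∨
      (j ≤ (D k a d (n - k)).length ∧ l * r = d (n + 1) + 2)) :
    FactorS k a d (pw ((pw (s k a d n) r).rotate j) l) := by
  rw [s_eq_sg hk ha hd0 hd] at h ⊢
  rw [FactorS_iff hk ha hd0 hd]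
  apply rotate_factor hk ha hd
  rw [Pal_T_length hk ha hd0 hd n hn]
  rcases h with ⟨hj, hlr⟩ | ⟨hj, hlr⟩
  · have := Nat.mul_le_mul_right (sg k a d n).length (show l * r ≤ d (n + 1) + 1 by omega)
    omega
  · rw [hlr, Nat.add_mul, Nat.add_mul]
    omega

lemma D_lt_s {k : ℕ} (hk : 2 ≤ k) {a : ℕ → α}
    (ha : ∀ i j, 1 ≤ i → i ≤ k → 1 ≤ j → j ≤ k → a i = a j → i = j)
    {d : ℕ → ℕ} (hd0 : d 0 = 0) (hd : ∀ i, 1 ≤ i → 1 ≤ d i) {n : ℕ} (hn : k ≤ n) :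
    (D k a d (n - k)).length < (s k a d n).length := by
  rw [s_eq_sg hk ha hd0 hd]
  have h1 := Pal_T_length hk ha hd0 hd n hn
  have h2 : (Pal (dir k a d) (T d n)).length < 2 * (sg k a d n).length := by
    refine Pal_length_lt (dir k a d) (T d n) (Or.inr ?_)
    obtain ⟨m, rfl⟩ : ∃ m, n = m + 1 := ⟨n - 1, by omega⟩
    have hdm := hd (m + 1) (by omega)
    rw [T_succ, Nat.add_sub_assoc hdm, dir_block hd m _ (by omega)]
    exact letter_ne hk ha (by omega) (by omega)
  omega

/-- The lengths of the words `s_n^r s_{n-1}^{d_n} ⋯ s_{n+1-i}` are strictly between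
consecutive multiples of `|s_n|` and below `|s_{n+1}|`. -/
lemma part_two_length {k : ℕ} (hk : 2 ≤ k) {a : ℕ → α}
    (ha : ∀ i j, 1 ≤ i → i ≤ k → 1 ≤ j → j ≤ k → a i = a j → i = j)
    {d : ℕ → ℕ} (hd0 : d 0 = 0) (hd : ∀ i, 1 ≤ i → 1 ≤ d i)
    {i n r : ℕ} (hi : 2 ≤ i) (hik : i ≤ k) (hin : i - 1 ≤ n) (hrd : r ≤ d (n + 1))
    (hrk : i = k → r ≤ d (n + 1) - 1) {v : List α}
    (hv : v = pw (s k a d n) r ++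
      ((List.range (i - 2)).map (fun j => pw (s k a d (n - 1 - j)) (d (n - j)))).flatten ++
      s k a d (n + 1 - i)) :
    r * (sg k a d n).length < v.length ∧ v.length < (r + 1) * (sg k a d n).length ∧
      v.length < (sg k a d (n + 1)).length := by
  simp only [s_eq_sg hk ha hd0 hd] at hv
  set F := ((List.range (i - 2)).map (fun j => pw (sg k a d (n - 1 - j)) (d (n - j)))).flatten
    with hF
  have hvl : v.length = r * (sg k a d n).length + F.length + (sg k a d (n + 1 - i)).length := by
    rw [hv]; simp [pw_length, Nat.add_assoc]
  obtain ⟨p, hp⟩ : ∃ p, n + 1 - i = p := ⟨_, rfl⟩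
  rw [hp] at hvl
  have hpos := sg_pos k a d p
  -- `F s_{n+1-i}` is a proper prefix of `s_n`
  have h1 : F.length + (sg k a d p).length < (sg k a d n).length := by
    have h2 := congrArg List.length (sg_expand hk ha hd n (i - 1) (by omega) hin)
    rw [show i - 1 = i - 2 + 1 by omega, List.range_succ, List.map_append, List.flatten_append,
      ← hF] at h2
    simp only [List.map_cons, List.map_nil, List.flatten_cons, List.flatten_nil, List.append_nil,
      List.length_append, pw_length] at h2
    rw [show n - 1 - (i - 2) = p by omega] at h2
    have h3 : (sg k a d p).length ≤ d (n - (i - 2)) * (sg k a d p).length :=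
      Nat.le_mul_of_pos_left _ (hd _ (by omega))
    have h4 := Phi_single_pos (dir k a d) (T d (n - (i - 2 + 1))) (a (n % k + 1))
    omega
  refine ⟨by omega, by rw [Nat.add_mul]; omega, ?_⟩
  by_cases hr : r + 1 ≤ d (n + 1)
  · have h2 := sg_lt_succ hk ha hd n
    have h3 := Nat.mul_le_mul_right (sg k a d n).length hr
    rw [Nat.add_mul] at h3
    omega
  · obtain rfl : r = d (n + 1) := by omega
    have hd1 := hd (n + 1) (by omega)
    have hik' : i < k := by
      rcases Nat.lt_or_ge i k with h | h
      · exact h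
      · have := hrk (by omega); omega
    have h2 := congrArg List.length (sg_expand hk ha hd (n + 1) i (by omega) (by omega))
    rw [show i = (i - 2 + 1) + 1 by omega, List.range_succ_eq_map, List.map_cons,
      List.flatten_cons, List.map_map, List.range_succ, List.map_append, List.flatten_append] at h2
    have hF' : (List.map ((fun j => pw (sg k a d (n + 1 - 1 - j)) (d (n + 1 - j))) ∘ Nat.succ)
        (List.range (i - 2))).flatten = F := by
      rw [hF]
      congr 1
      apply List.map_congr_left
      intro j _
      simp only [Function.comp, Nat.succ_eq_add_one]
      rw [show n + 1 - 1 - (j + 1) = n - 1 - j by omega, show n + 1 - (j + 1) = n - j by omega]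
    rw [hF'] at h2
    simp only [List.map_cons, List.map_nil, List.flatten_cons, List.flatten_nil, List.append_nil,
      List.length_append, pw_length, Function.comp, Nat.succ_eq_add_one, Nat.add_sub_cancel,
      Nat.sub_zero] at h2
    rw [show n - (i - 2 + 1) = p by omega] at h2
    have h3 : (sg k a d p).length ≤ d (n + 1 - (i - 2 + 1)) * (sg k a d p).length :=
      Nat.le_mul_of_pos_left _ (hd _ (by omega))
    have h4 := Phi_single_pos (dir k a d) (T d (n + 1 - (i - 2 + 1 + 1))) (a ((n + 1) % k + 1))
    omega

/-! ### The powers occurring in the word -/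

theorem stmt19 {α : Type*} (k : ℕ) (hk : 2 ≤ k) (a : ℕ → α)
    (ha : ∀ i j, 1 ≤ i → i ≤ k → 1 ≤ j → j ≤ k → a i = a j → i = j)
    (d : ℕ → ℕ) (hd0 : d 0 = 0) (hd : ∀ i, 1 ≤ i → 1 ≤ d i) (l : ℕ) (hl : 3 ≤ l) :
    (∀ n r : ℕ, k ≤ n → 1 ≤ r → r ≤ d (n + 1) →
      (l * r < d (n + 1) + 2 →
        {w : List α | w.length = r * (s k a d n).length ∧ FactorS k a d (pw w l)} =
          {w : List α | ∃ j, j < (s k a d n).length ∧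
              w = (pw (s k a d n) r).drop j ++ (pw (s k a d n) r).take j} ∧
        Set.ncard {w : List α | w.length = r * (s k a d n).length ∧
            FactorS k a d (pw w l)} = (s k a d n).length) ∧
      (l * r = d (n + 1) + 2 →
        {w : List α | w.length = r * (s k a d n).length ∧ FactorS k a d (pw w l)} =
          {w : List α | ∃ j, j ≤ (D k a d (n - k)).length ∧
              w = (pw (s k a d n) r).drop j ++ (pw (s k a d n) r).take j} ∧
        Set.ncard {w : List α | w.length = r * (s k a d n).length ∧
            FactorS k a d (pw w l)} = (D k a d (n - k)).length + 1) ∧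
      (d (n + 1) + 2 < l * r →
        {w : List α | w.length = r * (s k a d n).length ∧
            FactorS k a d (pw w l)} = ∅)) ∧
    (∀ i n r : ℕ, 2 ≤ i → i ≤ k → i - 1 ≤ n → 1 ≤ r → r ≤ d (n + 1) →
      (i = k → r ≤ d (n + 1) - 1) →
      ∀ v : List α,
        v = pw (s k a d n) r ++
            ((List.range (i - 2)).map
              (fun j => pw (s k a d (n - 1 - j)) (d (n - j)))).flatten ++
            s k a d (n + 1 - i) →
        ∀ w : List α, w.length = v.length → ¬ FactorS k a d (pw w l)) := by
  refine ⟨?_, ?_⟩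
  · intro n r hn hr hrd
    have hsl : (s k a d n).length ≤ (pw (s k a d n) r).length := by
      rw [pw_length]; exact Nat.le_mul_of_pos_left _ hr
    have hrot : ∀ j, j < (s k a d n).length →
        (pw (s k a d n) r).drop j ++ (pw (s k a d n) r).take j = (pw (s k a d n) r).rotate j :=
      fun j hj => (List.rotate_eq_drop_append_take (by omega)).symm
    have hinj : Set.InjOn
        (fun j => (pw (s k a d n) r).drop j ++ (pw (s k a d n) r).take j)
        (Set.Iio (s k a d n).length) := by
      intro i hi j hj h
      simp only [Set.mem_Iio] at hi hj
      simp only [hrot i hi, hrot j hj] at h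
      refine rotate_inj_of_prim ?_ hr hi hj h
      rw [s_eq_sg hk ha hd0 hd]
      exact sg_prim k a d n
    have hlen : ∀ j, ((pw (s k a d n) r).rotate j).length = r * (s k a d n).length := fun j => by
      rw [List.length_rotate, pw_length]
    refine ⟨fun hlr => ?_, fun hlr => ?_, fun hlr => ?_⟩
    · have hset : {w : List α | w.length = r * (s k a d n).length ∧ FactorS k a d (pw w l)} =
          {w : List α | ∃ j, j < (s k a d n).length ∧
              w = (pw (s k a d n) r).drop j ++ (pw (s k a d n) r).take j} := by
        ext w
        constructor
        · rintro ⟨hw, hf⟩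
          obtain ⟨_, j, hj, hwj, _⟩ := part_one hk ha hd0 hd hl hr hrd hw hf
          exact ⟨j, hj, by rw [hrot j hj]; exact hwj⟩
        · rintro ⟨j, hj, rfl⟩
          rw [hrot j hj]
          exact ⟨hlen j, part_one_conv hk ha hd0 hd hn (Or.inl ⟨hj, hlr⟩)⟩
      refine ⟨hset, ?_⟩
      have himg : {w : List α | ∃ j, j < (s k a d n).length ∧
              w = (pw (s k a d n) r).drop j ++ (pw (s k a d n) r).take j} =
          (fun j => (pw (s k a d n) r).drop j ++ (pw (s k a d n) r).take j) ''
            Set.Iio (s k a d n).length := by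
        ext w; simp [eq_comm]
      rw [hset, himg, hinj.ncard_image, Set.ncard_eq_toFinset_card']
      simp
    · have hD := D_lt_s hk ha hd0 hd hn
      have hset : {w : List α | w.length = r * (s k a d n).length ∧ FactorS k a d (pw w l)} =
          {w : List α | ∃ j, j ≤ (D k a d (n - k)).length ∧
              w = (pw (s k a d n) r).drop j ++ (pw (s k a d n) r).take j} := by
        ext w
        constructor
        · rintro ⟨hw, hf⟩
          obtain ⟨_, j, hj, hwj, hmax⟩ := part_one hk ha hd0 hd hl hr hrd hw hf
          exact ⟨j, hmax hlr, by rw [hrot j hj]; exact hwj⟩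
        · rintro ⟨j, hj, rfl⟩
          rw [hrot j (by omega)]
          exact ⟨hlen j, part_one_conv hk ha hd0 hd hn (Or.inr ⟨hj, hlr⟩)⟩
      refine ⟨hset, ?_⟩
      have himg : {w : List α | ∃ j, j ≤ (D k a d (n - k)).length ∧
              w = (pw (s k a d n) r).drop j ++ (pw (s k a d n) r).take j} =
          (fun j => (pw (s k a d n) r).drop j ++ (pw (s k a d n) r).take j) ''
            Set.Iic (D k a d (n - k)).length := by
        ext w; simp [eq_comm]
      rw [hset, himg, (hinj.mono fun j hj => by
        simp only [Set.mem_Iic, Set.mem_Iio] at hj ⊢; omega).ncard_image, Set.ncard_eq_toFinset_card']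
      simp
    · ext w
      simp only [Set.mem_ofPred_eq, Set.mem_empty_iff_false, iff_false]
      rintro ⟨hw, hf⟩
      have := (part_one hk ha hd0 hd hl hr hrd hw hf).1
      omega
  · intro i n r hi hik hin hr hrd hrk v hv w hw hf
    obtain ⟨h1, h2, h3⟩ := part_two_length hk ha hd0 hd hi hik hin hrd hrk hv
    rw [← hw] at h1 h2 h3
    rw [FactorS_iff hk ha hd0 hd] at hf
    obtain ⟨m, q, j, hq, hwq, hlq, -⟩ :=
      cube_structure hk ha hd0 hd hl (List.length_pos_iff.mp (by omega)) hf
    have h4 : (sg k a d n).length ≤ r * (sg k a d n).length := Nat.le_mul_of_pos_left _ hr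
    obtain rfl := index_unique hk ha hd hl hq hlq hwq (by omega) h3
    rw [hwq] at h1 h2
    have h5 := Nat.lt_of_mul_lt_mul_right h1
    have h6 := Nat.lt_of_mul_lt_mul_right h2
    omega

end Epi
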